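/- Let λ₀ be a non-trivial d-invariant rational lamination whose support is contained in the m_d-grand orbit of a finite set. Then λ₀ is not primitive: there exist distinct infinite λ₀-unlinked classes L ≠ L' and a λ₀-class A such that A intersects both closure(L) and closure(L'). -/

import Mathlib

noncomputable section
open Set Function

/-- The circle `ℝ/ℤ`. -/
abbrev Circle1 := AddCircle (1 : ℝ)

/-- Multiplication by `d` on the circle. -/
def md (d : ℕ) (x : Circle1) : Circle1 := d • x

/-- The rational angles `ℚ/ℤ ⊆ ℝ/ℤ`. -/
def ratC : Set Circle1 := {x | ∃ q : ℚ, x = ((q : ℝ) : Circle1)}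

/-- `A` and `B` are unlinked: `B` is contained in a single connected
component of the complement of `A`. -/
def Unlinked (A B : Set Circle1) : Prop :=
  ∃ x ∈ Aᶜ, B ⊆ connectedComponentIn Aᶜ x

/-- `C` is a connected component of `S`. -/
def IsCompOf (C S : Set Circle1) : Prop :=
  ∃ x ∈ S, C = connectedComponentIn S x

/-- The class of `x` under a relation `r`. -/
def relClass (r : Circle1 → Circle1 → Prop) (x : Circle1) : Set Circle1 := {y | r x y}

/-- A rational lamination: a closed equivalence relation on `ℚ/ℤ` with finite,
pairwise unlinked classes. -/
structure RatLam where
  rel : Circle1 → Circle1 → Prop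
  rel_rat : ∀ x y, rel x y → x ∈ ratC ∧ y ∈ ratC
  refl : ∀ x ∈ ratC, rel x x
  symm : ∀ x y, rel x y → rel y x
  trans : ∀ x y z, rel x y → rel y z → rel x z
  closed' : ∀ x ∈ ratC, ∀ y ∈ ratC,
    (x, y) ∈ closure {p : Circle1 × Circle1 | rel p.1 p.2} → rel x y
  finiteClass : ∀ x, (relClass rel x).Finite
  unlinkedClass : ∀ x y, ¬ rel x y → Unlinked (relClass rel x) (relClass rel y)

/-- `m_d` maps `A` onto `B` in a consecutive-preserving way: the image of `A` is `B`
and the connected components of the complement of `A` are sent to components of the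
complement of `B` endpoint-wise. -/
def ConsecutiveImage (d : ℕ) (A B : Set Circle1) : Prop :=
  md d '' A = B ∧
    ∀ C, IsCompOf C Aᶜ → ∃ C', IsCompOf C' Bᶜ ∧ frontier C' = md d '' frontier C

/-- A `d`-invariant rational lamination. -/
structure InvRatLam (d : ℕ) extends RatLam where
  invariant : ∀ x ∈ ratC,
    ConsecutiveImage d (relClass rel x) (relClass rel (md d x))

/-- `m_d : A → m_d(A)` is `δ`-to-one. -/
def classDeg (d : ℕ) (A : Set Circle1) (δ : ℕ) : Prop :=
  ∀ y ∈ md d '' A, Set.ncard {x | x ∈ A ∧ md d x = y} = δ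

/-- The `λ`-unlinked relation on irrational angles: `θ ~ θ'` iff they lie in the same
connected component of the complement of every `λ`-class. -/
def UnlRel (r : Circle1 → Circle1 → Prop) (θ θ' : Circle1) : Prop :=
  θ ∉ ratC ∧ θ' ∉ ratC ∧
    (θ = θ' ∨ ∀ x ∈ ratC, θ' ∈ connectedComponentIn (relClass r x)ᶜ θ)

/-- `L` is a `λ`-unlinked class. -/
def IsUnlClass (r : Circle1 → Circle1 → Prop) (L : Set Circle1) : Prop :=
  ∃ θ, θ ∉ ratC ∧ L = {θ' | UnlRel r θ θ'}

/-- The support of a relation: union of its nontrivial classes. -/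
def suppRel (r : Circle1 → Circle1 → Prop) : Set Circle1 := {x | ∃ y, r x y ∧ y ≠ x}

/-- The `m_d`-grand orbit of a set `F`. -/
def grandOrbit (d : ℕ) (F : Set Circle1) : Set Circle1 :=
  {x | ∃ n m : ℕ, (md d)^[n] x ∈ (md d)^[m] '' F}

/-- A lamination (given by the relation `r`) is primitive if no `λ`-class meets the
closures of two distinct infinite `λ`-unlinked classes. -/
def PrimitiveLam (d : ℕ) (r : Circle1 → Circle1 → Prop) : Prop :=
  ¬ ∃ (L L' : Set Circle1) (x : Circle1),
      IsUnlClass r L ∧ L.Infinite ∧ IsUnlClass r L' ∧ L'.Infinite ∧ L ≠ L' ∧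
      x ∈ ratC ∧ (relClass r x ∩ closure L).Nonempty ∧
      (relClass r x ∩ closure L').Nonempty

/-!
Suppose the lamination is primitive. Two gaps of one class cannot both bound infinite unlinked
classes, so at most one of them fails to be a limit of leaves; this produces a leaf that is a limit
of leaves on one side, and near such a leaf there are always further leaves of the same kind.
Near a leaf that is a limit of leaves, every preimage of a leaf under multiplication is again a
leaf, because the points equivalent to an endpoint of a nearby chord all lie close to its two
endpoints, where multiplication separates them.

Since the support lies in the grand orbit of a finite set, after replacing `d` by a power `D` every
leaf is eventually fixed. There are only finitely many fixed leaves, so one of them, `e`, is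
approached on its limit side by its own iterated preimages `w`. Pulling leaves near `e` back first
to `w` and then, by the branch of `D⁻¹` fixing `e`, towards `e` is an affine contraction; the
endpoints of its fixed point are rational, so it is a leaf. Such leaves are periodic and accumulate
at `e`, but a periodic leaf that is eventually fixed is fixed, and there are only finitely many.
-/

open Filter Topology

theorem exists_rel_self_of_total_of_trans {α : Type*} [Finite α] [Nonempty α] {R : α → α → Prop}
    (total : ∀ a, ∃ b, R a b) (trans : ∀ a b c, R a b → R b c → R a c) : ∃ a, R a a := by
  by_contra! irrefl
  have : IsTrans α (Function.swap R) := ⟨fun a b c hab hbc => trans c b a hbc hab⟩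
  have : Std.Irrefl (Function.swap R) := ⟨irrefl⟩
  obtain ⟨m, -, hm⟩ := (Finite.wellFounded_of_trans_of_irrefl (Function.swap R)).has_min univ
    univ_nonempty
  obtain ⟨b, hb⟩ := total m
  exact hm b (mem_univ b) hb

theorem not_countable_inter_of_forall_accPt {C U : Set ℝ} (hC : IsClosed C) (hU : IsOpen U)
    (hne : (C ∩ U).Nonempty) (hacc : ∀ x ∈ C ∩ U, AccPt x (𝓟 C)) : ¬ (C ∩ U).Countable := by
  obtain ⟨x, hxC, hxU⟩ := hne
  obtain ⟨V, hxV, hVc, hVU⟩ := exists_mem_nhds_isClosed_subset (hU.mem_nhds hxU)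
  have hperf : Preperfect (C ∩ interior V) := fun y hy => by
    have hyU : y ∈ C ∩ U := ⟨hy.1, hVU (interior_subset hy.2)⟩
    rw [accPt_iff_frequently_nhdsNE]
    exact (accPt_iff_frequently_nhdsNE.1 (hacc y hyU)).and_eventually
      (nhdsWithin_le_nhds (isOpen_interior.mem_nhds hy.2))
  obtain ⟨f, hf, -, hinj⟩ := hperf.perfect_closure.exists_nat_bool_injection
    (closure_nonempty_iff.2 ⟨x, hxC, mem_interior_iff_mem_nhds.2 hxV⟩)
  have hsub : closure (C ∩ interior V) ⊆ C ∩ U := fun y hy =>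
    ⟨hC.closure_subset_iff.2 inter_subset_left hy,
      hVU (hVc.closure_subset_iff.2 (inter_subset_right.trans interior_subset) hy)⟩
  intro hcount
  have hcard : Cardinal.mk (range f) ≤ Cardinal.aleph0 := (hcount.mono (hf.trans hsub)).le_aleph0
  rw [Cardinal.mk_range_eq f hinj] at hcard
  exact Cardinal.aleph0_lt_continuum.not_ge (by simpa using hcard)

theorem exists_mem_Ioc_Ioo_subset {α : Type*} [ConditionallyCompleteLinearOrder α]
    [TopologicalSpace α] [OrderTopology α] {O : Set α} (hO : IsOpen O) {x b : α}
    (hxb : x < b) (hb : b ∉ O) (hx : ∀ᶠ θ in 𝓝[>] x, θ ∈ O) :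
    ∃ y ∈ Ioc x b, y ∉ O ∧ Ioo x y ⊆ O := by
  obtain ⟨z, hxz, hzO⟩ := (mem_nhdsGT_iff_exists_Ioo_subset' hxb).1 hx
  have hzb : z ≤ b := le_of_not_gt fun h => hb (hzO ⟨hxb, h⟩)
  obtain ⟨y, ⟨⟨hzy, hyb⟩, hy⟩, hmin⟩ :=
    (isCompact_Icc.inter_right hO.isClosed_compl).exists_isLeast ⟨b, ⟨hzb, le_rfl⟩, hb⟩
  refine ⟨y, ⟨hxz.trans_le hzy, hyb⟩, hy, fun θ hθ => ?_⟩
  by_contra hθO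
  have hzθ : z ≤ θ := le_of_not_gt fun h => hθO (hzO ⟨hθ.1, h⟩)
  exact hθ.2.not_ge (hmin ⟨⟨hzθ, hθ.2.le.trans hyb⟩, hθO⟩)

theorem exists_mem_Ico_Ioo_subset {α : Type*} [ConditionallyCompleteLinearOrder α]
    [TopologicalSpace α] [OrderTopology α] {O : Set α} (hO : IsOpen O) {x a : α}
    (hax : a < x) (ha : a ∉ O) (hx : ∀ᶠ θ in 𝓝[<] x, θ ∈ O) :
    ∃ y ∈ Ico a x, y ∉ O ∧ Ioo y x ⊆ O := by
  obtain ⟨y, hy, hyO, hsub⟩ := exists_mem_Ioc_Ioo_subset (α := αᵒᵈ) (O := O) (x := x) hO hax ha hx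
  exact ⟨y, ⟨hy.2, hy.1⟩, hyO, fun θ hθ => hsub ⟨hθ.2, hθ.1⟩⟩

theorem frequently_nhdsGT_prod_nhdsLT_iff {u v : ℝ} {P : ℝ × ℝ → Prop} :
    (∃ᶠ p in 𝓝[>] u ×ˢ 𝓝[<] v, P p) ↔
      ∃ᶠ p in 𝓝[≥] u ×ˢ 𝓝[≤] v, P p ∧ u < p.1 ∧ p.2 < v := by
  rw [← nhdsWithin_prod_eq, ← nhdsWithin_prod_eq, frequently_nhdsWithin_iff,
    frequently_nhdsWithin_iff]
  exact frequently_congr (.of_forall fun p =>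
    ⟨fun h => ⟨h, (mem_Ioi.1 h.2.1).le, (mem_Iio.1 h.2.2).le⟩, And.left⟩)

theorem isFixedPt_of_isPeriodicPt {α : Type*} {f : α → α} {x : α} {J K : ℕ} (hJ : 0 < J)
    (hper : IsPeriodicPt f J x) (hfix : IsFixedPt f (f^[K] x)) : IsFixedPt f x := by
  obtain ⟨c, hc⟩ := Nat.exists_eq_add_of_le' (Nat.le_mul_of_pos_left K hJ)
  have hx : f^[K] x = x := by
    conv_rhs => rw [← (hper.mul_const K).eq, hc, iterate_add_apply, (hfix.iterate c).eq]
  rwa [hx] at hfix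

theorem exists_mem_closure_isFixedPt {E : Type*} [NormedAddCommGroup E] [NormedSpace ℝ E]
    [CompleteSpace E] {S : Set E} (hS : S.Nonempty) {c : ℝ} (hc0 : 0 ≤ c) (hc1 : c < 1) {g : E}
    (hmaps : MapsTo (fun v => g + c • v) S S) : ∃ v ∈ closure S, g + c • v = v := by
  lift c to NNReal using hc0
  have hcontr : ContractingWith c (fun v : E => g + c • v) := by
    refine ⟨by exact_mod_cast hc1, LipschitzWith.of_dist_le_mul fun v w => ?_⟩
    simp [dist_eq_norm, ← smul_sub, norm_smul, NNReal.smul_def]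
  obtain ⟨v, hv⟩ := hS
  exact ⟨_, mem_closure_of_tendsto (hcontr.tendsto_iterate_fixedPoint v)
    (Eventually.of_forall fun n => hmaps.iterate n hv), hcontr.fixedPoint_isFixedPt⟩

namespace Circle1

theorem coe_eq_coe_iff {x y : ℝ} : (x : Circle1) = y ↔ ∃ n : ℤ, y = x + n := by
  rw [QuotientAddGroup.eq, AddSubgroup.mem_zmultiples_iff]
  simp only [zsmul_eq_mul, mul_one, neg_add_eq_sub, eq_sub_iff_add_eq']
  exact exists_congr fun _ => eq_comm

theorem coe_add_one (x : ℝ) : ((x + 1 : ℝ) : Circle1) = x := AddCircle.coe_add_period 1 x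

theorem exists_mem_Ioc_coe_eq (a : ℝ) (z : Circle1) : ∃ x ∈ Ioc a (a + 1), (x : Circle1) = z :=
  (AddCircle.coe_image_Ioc_eq 1 a).symm.subset (mem_univ z)

theorem coe_inj_of_abs_sub_lt_one {x y : ℝ} (h : (x : Circle1) = y) (hxy : |x - y| < 1) :
    x = y := by
  obtain ⟨n, rfl⟩ := coe_eq_coe_iff.1 h
  have : |n| < 1 := by
    have : |(n : ℝ)| < 1 := by simpa using hxy
    exact_mod_cast this
  simp [Int.abs_lt_one_iff.1 this]

theorem tendsto_coe_nhdsNE (x : ℝ) : Tendsto ((↑) : ℝ → Circle1) (𝓝[≠] x) (𝓝[≠] ↑x) := by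
  refine tendsto_nhdsWithin_iff.2
    ⟨(AddCircle.continuous_mk' 1).continuousAt.mono_left nhdsWithin_le_nhds, ?_⟩
  filter_upwards [self_mem_nhdsWithin, nhdsWithin_le_nhds (Metric.ball_mem_nhds x one_pos)]
    with s hs hsx heq
  exact hs (coe_inj_of_abs_sub_lt_one heq (by simpa [Real.dist_eq] using hsx))

theorem eventually_coe_notMem {A : Set Circle1} (hA : A.Finite) (x : ℝ) :
    ∀ᶠ s : ℝ in 𝓝[≠] x, (s : Circle1) ∉ A :=
  by
  refine (tendsto_coe_nhdsNE x).eventually (p := (· ∉ A)) ?_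
  have hclosed : IsClosed (A \ {(x : Circle1)}) := (hA.subset sdiff_subset).isClosed
  filter_upwards [self_mem_nhdsWithin, nhdsWithin_le_nhds (hclosed.compl_mem_nhds (by simp))]
    with y hyx hyA hy
  exact hyA ⟨hy, hyx⟩

theorem coe_mem_ratC_iff {x : ℝ} : (x : Circle1) ∈ ratC ↔ x ∈ range ((↑) : ℚ → ℝ) := by
  refine ⟨fun ⟨q, hq⟩ => ?_, fun ⟨q, hq⟩ => ⟨q, hq ▸ rfl⟩⟩
  obtain ⟨n, hn⟩ := coe_eq_coe_iff.1 hq.symm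
  exact ⟨q + n, by simp [hn]⟩

theorem mem_ratC_iff {x : Circle1} : x ∈ ratC ↔ IsOfFinAddOrder x := by
  induction x using QuotientAddGroup.induction_on with | H x => ?_
  rw [coe_mem_ratC_iff, AddCircle.isOfFinAddOrder_iff_exists_rat_eq_div, div_one]
  rfl

theorem exists_pow_nsmul_eq_of_mem_ratC (d : ℕ) {x : Circle1} (hx : x ∈ ratC) :
    ∃ i j : ℕ, i < j ∧ d ^ i • x = d ^ j • x := by
  have hfin : (range fun i : ℕ => d ^ i • x).Finite :=
    (mem_ratC_iff.1 hx).finite_multiples.subset (range_subset_iff.2 fun i => ⟨d ^ i, rfl⟩)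
  obtain ⟨i, j, hij, h⟩ := hfin.exists_lt_map_eq_of_forall_mem (fun i : ℕ => mem_range_self i)
  exact ⟨i, j, hij, h⟩

theorem mem_ratC_of_nsmul_eq {x : Circle1} {n m : ℕ} (hnm : n < m) (h : n • x = m • x) :
    x ∈ ratC := by
  rw [mem_ratC_iff, isOfFinAddOrder_iff_nsmul_eq_zero]
  exact ⟨m - n, Nat.sub_pos_of_lt hnm, by rw [sub_nsmul x hnm.le, h, add_neg_cancel]⟩

theorem nsmul_mem_ratC {x : Circle1} (n : ℕ) (hx : x ∈ ratC) : n • x ∈ ratC :=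
  mem_ratC_iff.2 (mem_ratC_iff.1 hx).nsmul

theorem mem_ratC_of_nsmul_mem {x : Circle1} {n : ℕ} (hn : n ≠ 0) (hx : n • x ∈ ratC) :
    x ∈ ratC :=
  mem_ratC_iff.2 ((mem_ratC_iff.1 hx).of_nsmul hn)

theorem finite_setOf_nsmul_eq {n : ℕ} (hn : 2 ≤ n) : {x : Circle1 | n • x = x}.Finite := by
  refine (AddCircle.finite_torsion 1 (Nat.sub_pos_of_lt hn)).subset fun x (hx : n • x = x) => ?_
  rw [mem_ofPred_eq, sub_nsmul x (by lia), hx, one_nsmul, add_neg_cancel]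

theorem neg_mem_ratC {x : Circle1} : -x ∈ ratC ↔ x ∈ ratC := by
  simp only [mem_ratC_iff, isOfFinAddOrder_neg_iff]

theorem notMem_of_isPreconnected {a u b v : ℝ} (hau : a < u) (hub : u < b) (hbv : b < v)
    (hva : v < a + 1) {S : Set Circle1} (hS : IsPreconnected S) (ha : (a : Circle1) ∉ S)
    (hb : (b : Circle1) ∉ S) (hu : (u : Circle1) ∈ S) : (v : Circle1) ∉ S := by
  intro hv
  have hopen : IsOpenMap ((↑) : ℝ → Circle1) := QuotientAddGroup.isOpenMap_coe
  have hcover : S ⊆ (↑) '' Ioo a b ∪ (↑) '' Ioo b (a + 1) := fun z hz => by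
    obtain ⟨x, hx, rfl⟩ := exists_mem_Ioc_coe_eq a z
    have hxb : x ≠ b := by rintro rfl; exact hb hz
    have hxa : x ≠ a + 1 := by rintro rfl; exact ha (coe_add_one a ▸ hz)
    rcases hxb.lt_or_gt with h | h
    exacts [.inl ⟨x, ⟨hx.1, h⟩, rfl⟩, .inr ⟨x, ⟨h, hx.2.lt_of_ne hxa⟩, rfl⟩]
  obtain ⟨z, -, ⟨x, hx, rfl⟩, y, hy, hxy⟩ := hS _ _ (hopen _ isOpen_Ioo) (hopen _ isOpen_Ioo)
    hcover ⟨_, hu, u, ⟨hau, hub⟩, rfl⟩ ⟨_, hv, v, ⟨hbv, hva⟩, rfl⟩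
  have hlt : x < y := hx.2.trans hy.1
  have hdist : |y - x| < 1 := abs_lt.2 ⟨by linarith, by linarith [hx.1, hy.2]⟩
  exact hlt.ne' (coe_inj_of_abs_sub_lt_one hxy hdist)

end Circle1

namespace RatLam

variable (lam : RatLam)

theorem eventually_not_rel (z : Circle1) (x : ℝ) : ∀ᶠ w : ℝ in 𝓝[≠] x, ¬ lam.rel z w :=
  Circle1.eventually_coe_notMem (lam.finiteClass z) x

theorem isClosed_setOf_rel_coe (z : Circle1) : IsClosed {w : ℝ | lam.rel z w} :=
  (lam.finiteClass z).isClosed.preimage (AddCircle.continuous_mk' 1)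

theorem rel_of_crossing {a x b y : ℝ} (hax : a < x) (hxb : x < b) (hby : b < y) (hya : y < a + 1)
    (hab : lam.rel a b) (hxy : lam.rel x y) : lam.rel a x := by
  by_contra hcon
  obtain ⟨z, -, hsub⟩ := lam.unlinkedClass _ _ hcon
  have havoid := connectedComponentIn_subset (relClass lam.rel a)ᶜ z
  exact Circle1.notMem_of_isPreconnected hax hxb hby hya isPreconnected_connectedComponentIn
    (fun h => havoid h (lam.refl _ (lam.rel_rat _ _ hab).1)) (fun h => havoid h hab)
    (hsub (lam.refl _ (lam.rel_rat _ _ hxy).1)) (hsub hxy)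

/-- The mirror image of a lamination under `x ↦ -x`; it turns statements about left
neighbourhoods into statements about right neighbourhoods. -/
def neg : RatLam where
  rel x y := lam.rel (-x) (-y)
  rel_rat x y h := by simpa only [Circle1.neg_mem_ratC] using lam.rel_rat _ _ h
  refl x hx := lam.refl _ (Circle1.neg_mem_ratC.2 hx)
  symm x y h := lam.symm _ _ h
  trans x y z h h' := lam.trans _ _ _ h h'
  closed' x hx y hy h :=
    lam.closed' _ (Circle1.neg_mem_ratC.2 hx) _ (Circle1.neg_mem_ratC.2 hy)
      (map_mem_closure (f := fun p : Circle1 × Circle1 => -p) continuous_neg h fun _ hp => hp)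
  finiteClass x := (lam.finiteClass (-x)).preimage neg_injective.injOn
  unlinkedClass x y h := by
    obtain ⟨z, hz, hsub⟩ := lam.unlinkedClass _ _ h
    refine ⟨-z, by simpa [relClass] using hz, fun w hw => ?_⟩
    have hcomp := (Homeomorph.neg Circle1).image_connectedComponentIn hz
    simp only [Homeomorph.coe_neg, image_neg_eq_neg] at hcomp
    exact hcomp.subset (mem_neg.2 (hsub hw))

/-- The arc from `a` to `b` is a gap of the class of `a`: its endpoints, but none of its interior
points, belong to the class. The arc is lifted to `ℝ`, and `b = a + 1` is the gap of a singleton. -/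
structure IsGap (a b : ℝ) : Prop where
  lt : a < b
  le_add_one : b ≤ a + 1
  rel : lam.rel a b
  not_rel : ∀ w ∈ Ioo a b, ¬ lam.rel a w

theorem exists_isGap {A c B : ℝ} (hAc : A < c) (hcB : c < B) (hBA : B ≤ A + 1)
    (hAB : lam.rel A B) (hc : ¬ lam.rel A c) :
    ∃ a b, lam.IsGap a b ∧ lam.rel A a ∧ A ≤ a ∧ a < c ∧ c < b ∧ b ≤ B := by
  have hclosed := lam.isClosed_setOf_rel_coe A
  have hAA := lam.refl _ (lam.rel_rat _ _ hAB).1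
  obtain ⟨a, ⟨⟨hAa, hac⟩, ha⟩, hamax⟩ :=
    (isCompact_Icc.inter_right hclosed).exists_isGreatest ⟨A, ⟨le_rfl, hAc.le⟩, hAA⟩
  obtain ⟨b, ⟨⟨hcb, hbB⟩, hb⟩, hbmin⟩ :=
    (isCompact_Icc.inter_right hclosed).exists_isLeast ⟨B, ⟨hcB.le, le_rfl⟩, hAB⟩
  have hac : a < c := hac.lt_of_ne (by rintro rfl; exact hc ha)
  have hcb : c < b := hcb.lt_of_ne (by rintro rfl; exact hc hb)
  refine ⟨a, b, ⟨hac.trans hcb, by linarith, lam.trans _ _ _ (lam.symm _ _ ha) hb, ?_⟩, ha, hAa,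
    hac, hcb, hbB⟩
  intro w hw haw
  have hAw := lam.trans _ _ _ ha haw
  rcases le_total w c with hwc | hcw
  · exact hw.1.not_ge (hamax ⟨⟨hAa.trans hw.1.le, hwc⟩, hAw⟩)
  · exact hw.2.not_ge (hbmin ⟨⟨hcw, hw.2.le.trans hbB⟩, hAw⟩)

end RatLam

/-! ### Chords and their one-sided neighbourhoods -/

/-- The projection of `ℝ × ℝ` onto the torus. -/
def torusMk : ℝ × ℝ →+ Circle1 × Circle1 :=
  (QuotientAddGroup.mk' _).prodMap (QuotientAddGroup.mk' _)

theorem continuous_torusMk : Continuous torusMk :=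
  (AddCircle.continuous_mk' 1).prodMap (AddCircle.continuous_mk' 1)

theorem isOpenMap_torusMk : IsOpenMap torusMk :=
  QuotientAddGroup.isOpenMap_coe.prodMap QuotientAddGroup.isOpenMap_coe

/-- The two open quadrants of `ℝ × ℝ` in which the coordinates have opposite signs. A chord whose
endpoints move by a vector of such a quadrant does not cross the original chord; the Boolean tells
on which side of it the new one lies. -/
def quadrant : Bool → Set (ℝ × ℝ)
  | true => Ioi 0 ×ˢ Iio 0
  | false => Iio 0 ×ˢ Ioi 0

theorem isOpen_quadrant (η : Bool) : IsOpen (quadrant η) := by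
  cases η
  exacts [isOpen_Iio.prod isOpen_Ioi, isOpen_Ioi.prod isOpen_Iio]

theorem smul_mem_quadrant {η : Bool} {c : ℝ} (hc : 0 < c) {v : ℝ × ℝ} :
    c • v ∈ quadrant η ↔ v ∈ quadrant η := by
  cases η <;> simp [quadrant, hc, mul_neg_iff, hc.not_gt]

theorem add_mem_quadrant {η : Bool} {v w : ℝ × ℝ} (hv : v ∈ quadrant η) (hw : w ∈ quadrant η) :
    v + w ∈ quadrant η := by
  cases η
  exacts [⟨add_neg (mem_Iio.1 hv.1) hw.1, add_pos (mem_Ioi.1 hv.2) hw.2⟩,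
    ⟨add_pos (mem_Ioi.1 hv.1) hw.1, add_neg (mem_Iio.1 hv.2) hw.2⟩]

theorem swap_mem_quadrant {η : Bool} {v : ℝ × ℝ} : v.swap ∈ quadrant (!η) ↔ v ∈ quadrant η := by
  cases η <;> simp [quadrant, and_comm]

/-- The filter of one-sided neighbourhoods of a chord `e`, given as a pair of points of the circle,
on the side `η`. -/
def germ (η : Bool) (e : Circle1 × Circle1) : Filter (Circle1 × Circle1) :=
  map (fun v => e + torusMk v) (𝓝[quadrant η] 0)

theorem germ_le_nhds (η : Bool) (e : Circle1 × Circle1) : germ η e ≤ 𝓝 e := by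
  have h : Tendsto (fun v => e + torusMk v) (𝓝 0) (𝓝 (e + torusMk 0)) :=
    (continuous_const.add continuous_torusMk).tendsto 0
  rw [map_zero, add_zero] at h
  exact h.mono_left nhdsWithin_le_nhds

theorem map_nsmul_germ {M : ℕ} (hM : M ≠ 0) (η : Bool) (e : Circle1 × Circle1) :
    map (M • ·) (germ η e) = germ η (M • e) := by
  have hM' : (0 : ℝ) < M := by positivity
  have himage : (fun v : ℝ × ℝ => (M : ℝ) • v) '' quadrant η = quadrant η := by
    refine Subset.antisymm (image_subset_iff.2 fun v hv => (smul_mem_quadrant hM').2 hv)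
      fun v hv => ⟨(M : ℝ)⁻¹ • v, (smul_mem_quadrant (inv_pos.2 hM')).2 hv, ?_⟩
    exact smul_inv_smul₀ hM'.ne' v
  have hscale : map ((M : ℝ) • ·) (𝓝[quadrant η] 0) = 𝓝[quadrant η] (0 : ℝ × ℝ) := by
    have := (Homeomorph.smulOfNeZero (α := ℝ × ℝ) (M : ℝ) hM'.ne').isEmbedding.map_nhdsWithin_eq
      (quadrant η) 0
    simpa only [Homeomorph.smulOfNeZero_apply, himage, smul_zero] using this
  conv_rhs => rw [germ, ← hscale, map_map]
  rw [germ, map_map]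
  refine congrArg (map · _) (funext fun v => ?_)
  simp only [comp_apply, smul_add, Nat.cast_smul_eq_nsmul, map_nsmul]

theorem map_swap_germ (η : Bool) (e : Circle1 × Circle1) :
    map Prod.swap (germ η e) = germ (!η) e.swap := by
  have himage : Prod.swap '' quadrant η = quadrant (!η) := by
    ext v
    rw [image_swap_eq_preimage_swap, mem_preimage, ← swap_mem_quadrant, Prod.swap_swap]
  have hswap : map Prod.swap (𝓝[quadrant η] (0 : ℝ × ℝ)) = 𝓝[quadrant (!η)] 0 := by
    have := (Homeomorph.prodComm ℝ ℝ).isEmbedding.map_nhdsWithin_eq (quadrant η) 0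
    simpa only [Homeomorph.coe_prodComm, himage, Prod.swap_zero] using this
  rw [germ, germ, ← hswap, map_map, map_map]
  rfl

theorem germ_true_coe (x y : ℝ) :
    germ true (x, y) = map torusMk (𝓝[>] x ×ˢ 𝓝[<] y) := by
  have himage : (fun v : ℝ × ℝ => (x, y) + v) '' quadrant true = Ioi x ×ˢ Iio y := by
    ext v
    simp [quadrant, image_add_left]
  have htrans : map (fun v : ℝ × ℝ => (x, y) + v) (𝓝[quadrant true] 0) = 𝓝[>] x ×ˢ 𝓝[<] y := by
    have := (Homeomorph.addLeft (x, y)).isEmbedding.map_nhdsWithin_eq (quadrant true) 0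
    simpa only [Homeomorph.coe_addLeft, himage, add_zero, nhdsWithin_prod_eq] using this
  rw [← htrans, map_map]
  rfl

theorem eventually_germ_eventually_nhds {η : Bool} {e : Circle1 × Circle1}
    {P : Circle1 × Circle1 → Prop} (h : ∀ᶠ w in germ η e, P w) :
    ∀ᶠ w in germ η e, ∀ᶠ u in 𝓝 w, P u := by
  have hopen : IsOpenMap fun v => e + torusMk v := (isOpenMap_add_left e).comp isOpenMap_torusMk
  rw [germ, eventually_map] at h ⊢
  filter_upwards [eventually_eventually_nhdsWithin.2 h, self_mem_nhdsWithin] with v hv hvη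
  rw [(isOpen_quadrant η).nhdsWithin_eq hvη] at hv
  exact hopen.nhds_le v hv

theorem frequently_germ_of_frequently_nhds {η : Bool} {e : Circle1 × Circle1}
    {P : Circle1 × Circle1 → Prop} (h : ∃ᶠ w in germ η e, ∃ᶠ u in 𝓝 w, P u) :
    ∃ᶠ w in germ η e, P w := fun hnot =>
  h ((eventually_germ_eventually_nhds hnot).mono fun _ hw hfreq => hfreq hw)

theorem eventually_germ_fst_notMem {A : Set Circle1} (hA : A.Finite) (η : Bool)
    (e : Circle1 × Circle1) : ∀ᶠ w in germ η e, w.1 ∉ A := by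
  have hne : Tendsto Prod.fst (𝓝[quadrant η] (0 : ℝ × ℝ)) (𝓝[≠] 0) := by
    refine tendsto_nhdsWithin_iff.2 ⟨(continuous_fst.tendsto 0).mono_left nhdsWithin_le_nhds, ?_⟩
    filter_upwards [self_mem_nhdsWithin] with v hv
    cases η
    exacts [hv.1.ne, hv.1.ne']
  exact hne.eventually (Circle1.eventually_coe_notMem
    (hA.preimage (add_right_injective e.1).injOn) 0)

theorem eventually_germ_fst_ne_snd (η : Bool) (e : Circle1 × Circle1) :
    ∀ᶠ w in germ η e, w.1 ≠ w.2 := by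
  have hne : Tendsto (fun v : ℝ × ℝ => v.1 - v.2) (𝓝[quadrant η] 0) (𝓝[≠] 0) := by
    refine tendsto_nhdsWithin_iff.2 ⟨?_, ?_⟩
    · exact ((continuous_fst.sub continuous_snd).tendsto' 0 0 (by simp)).mono_left
        nhdsWithin_le_nhds
    · filter_upwards [self_mem_nhdsWithin] with v hv
      cases η
      exacts [(sub_neg.2 (hv.1.trans hv.2)).ne, (sub_pos.2 (hv.2.trans hv.1)).ne']
  refine (hne.eventually (Circle1.eventually_coe_notMem (finite_singleton (e.2 - e.1)) 0)).mono ?_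
  intro v hv (heq : e.1 + (v.1 : Circle1) = e.2 + (v.2 : Circle1))
  refine hv ?_
  rw [mem_singleton_iff, AddCircle.coe_sub, sub_eq_sub_iff_add_eq_add, add_comm, heq]

/-! ### Limits of leaves -/

namespace RatLam

variable (lam : RatLam)

/-- The pairs of equivalent angles, degenerate pairs `(x, x)` included, as a subset of the
torus. -/
def leaves : Set (Circle1 × Circle1) := {p | lam.rel p.1 p.2}

/-- The chord `e` is a limit of leaves on its side `η`. -/
def IsLimit (η : Bool) (e : Circle1 × Circle1) : Prop := ∃ᶠ w in germ η e, w ∈ lam.leaves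

variable {lam}

theorem isLimit_true_iff {x y : ℝ} : lam.IsLimit true (x, y) ↔
    ∃ᶠ p : ℝ × ℝ in 𝓝[>] x ×ˢ 𝓝[<] y, lam.rel p.1 p.2 := by
  rw [IsLimit, germ_true_coe, frequently_map]
  rfl

theorem IsLimit.eventually_not_rel {x y ε : ℝ} (h : lam.IsLimit true (x, y)) (hyx : y ≤ x + 1)
    (hε : 0 < ε) : ∀ᶠ s : ℝ in 𝓝[>] x, ∀ Y ∈ Icc (x + ε) (y - ε), ¬ lam.rel s Y := by
  have hnear : ∀ᶠ p : ℝ × ℝ in 𝓝[>] x ×ˢ 𝓝[<] y,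
      p.1 ∈ Ioo x (x + ε) ∧ p.2 ∈ Ioo (y - ε) y :=
    prod_mem_prod (Ioo_mem_nhdsGT (by linarith)) (Ioo_mem_nhdsLT (by linarith))
  obtain ⟨⟨x', y'⟩, hrel, hx', hy'⟩ := ((isLimit_true_iff.1 h).and_eventually hnear).exists
  filter_upwards [Ioo_mem_nhdsGT hx'.1,
    nhdsWithin_mono x (fun s hs => ne_of_gt hs) (lam.eventually_not_rel x' x)]
    with s hs hxs Y hY hsY
  exact hxs (lam.symm _ _ (lam.rel_of_crossing hs.2 (by linarith [hx'.2, hY.1])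
    (by linarith [hy'.1, hY.2]) (by linarith [hy'.2, hs.1]) hsY hrel))

theorem IsLimit.snd_unique {x y₁ y₂ : Circle1} (h₁ : lam.IsLimit true (x, y₁))
    (h₂ : lam.IsLimit true (x, y₂)) : y₁ = y₂ := by
  induction x using QuotientAddGroup.induction_on with | H x => ?_
  obtain ⟨y₁, hy₁, rfl⟩ := Circle1.exists_mem_Ioc_coe_eq x y₁
  obtain ⟨y₂, hy₂, rfl⟩ := Circle1.exists_mem_Ioc_coe_eq x y₂
  wlog hlt : y₁ < y₂ generalizing y₁ y₂
  · rcases (not_lt.1 hlt).eq_or_lt with rfl | hlt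
    exacts [rfl, (this y₂ hy₂ h₂ y₁ hy₁ h₁ hlt).symm]
  obtain ⟨ε, hε, hεx, hεy⟩ : ∃ ε > 0, x + ε < y₁ ∧ y₁ ≤ y₂ - ε :=
    ⟨min ((y₁ - x) / 2) (y₂ - y₁), lt_min (by linarith [hy₁.1]) (by linarith),
      by linarith [min_le_left ((y₁ - x) / 2) (y₂ - y₁), hy₁.1],
      by linarith [min_le_right ((y₁ - x) / 2) (y₂ - y₁)]⟩
  have hfar := (h₂.eventually_not_rel hy₂.2 hε).prod_mk (Ioo_mem_nhdsLT hεx)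
  obtain ⟨p, hrel, hnot, hp⟩ := ((isLimit_true_iff.1 h₁).and_eventually hfar).exists
  exact absurd hrel (hnot p.2 ⟨hp.1.le, hp.2.le.trans hεy⟩)

theorem IsLimit.nsmul {M : ℕ} (hM : M ≠ 0) (hfwd : MapsTo (M • ·) lam.leaves lam.leaves) {η : Bool}
    {e : Circle1 × Circle1} (h : lam.IsLimit η e) : lam.IsLimit η (M • e) := by
  rw [IsLimit, ← map_nsmul_germ hM, frequently_map]
  exact h.mono fun w hw => hfwd hw

variable {d : ℕ}

theorem IsLimit.snd_mem_ratC (hd : 2 ≤ d) (hfwd : MapsTo (d • ·) lam.leaves lam.leaves)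
    {x y : Circle1} (hx : x ∈ ratC) (h : lam.IsLimit true (x, y)) : y ∈ ratC := by
  obtain ⟨i, j, hij, hxij⟩ := Circle1.exists_pow_nsmul_eq_of_mem_ratC d hx
  have hpow (n : ℕ) : lam.IsLimit true (d ^ n • x, d ^ n • y) :=
    h.nsmul (pow_ne_zero n (by lia)) (by simpa only [smul_iterate] using hfwd.iterate n)
  exact Circle1.mem_ratC_of_nsmul_eq (Nat.pow_lt_pow_right hd hij)
    ((hpow i).snd_unique (hxij ▸ hpow j))

theorem rel_of_frequently_of_left_mem_ratC (hd : 2 ≤ d)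
    (hfwd : MapsTo (d • ·) lam.leaves lam.leaves) {u v : ℝ} (hu : (u : Circle1) ∈ ratC)
    (h : ∃ᶠ p : ℝ × ℝ in 𝓝[≥] u ×ˢ 𝓝[≤] v, lam.rel p.1 p.2) : lam.rel u v := by
  by_cases hv : (v : Circle1) ∈ ratC
  · have hle : 𝓝[≥] u ×ˢ 𝓝[≤] v ≤ 𝓝 (u, v) := by
      rw [← nhdsWithin_prod_eq]
      exact nhdsWithin_le_nhds
    exact lam.closed' _ hu _ hv (mem_closure_of_frequently_of_tendsto h
      ((continuous_torusMk.tendsto (u, v)).mono_left hle))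
  · have huv : ∀ᶠ y : ℝ in 𝓝[≤] v, ¬ lam.rel u y := nhdsWithin_le_nhds
      ((lam.isClosed_setOf_rel_coe u).isOpen_compl.mem_nhds fun h => hv (lam.rel_rat _ _ h).2)
    refine absurd (IsLimit.snd_mem_ratC hd hfwd hu (isLimit_true_iff.2 ?_)) hv
    have hmem : ∀ᶠ p : ℝ × ℝ in 𝓝[≥] u ×ˢ 𝓝[≤] v, u ≤ p.1 ∧ p.2 ≤ v :=
      prod_mem_prod self_mem_nhdsWithin self_mem_nhdsWithin
    refine frequently_nhdsGT_prod_nhdsLT_iff.2 <| (h.and_eventually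
      ((huv.prod_inr _).and hmem)).mono fun p ⟨hrel, hup, hp⟩ => ⟨hrel, ?_, ?_⟩
    · refine hp.1.lt_of_ne fun heq => hup ?_
      rwa [heq]
    · refine hp.2.lt_of_ne fun heq => hv ?_
      rw [← heq]
      exact (lam.rel_rat _ _ hrel).2

theorem rel_of_frequently_of_right_mem_ratC (hd : 2 ≤ d)
    (hfwd : MapsTo (d • ·) lam.leaves lam.leaves) {u v : ℝ} (hv : (v : Circle1) ∈ ratC)
    (h : ∃ᶠ p : ℝ × ℝ in 𝓝[≥] u ×ˢ 𝓝[≤] v, lam.rel p.1 p.2) : lam.rel u v := by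
  have hmirror : Tendsto (fun p : ℝ × ℝ => (-p.2, -p.1)) (𝓝[≥] u ×ˢ 𝓝[≤] v)
      (𝓝[≥] (-v) ×ˢ 𝓝[≤] (-u)) :=
    ((tendsto_neg_nhdsLE (a := v)).comp tendsto_snd).prodMk
      ((tendsto_neg_nhdsGE (a := u)).comp tendsto_fst)
  have hneg : lam.neg.rel ((-v : ℝ) : Circle1) ((-u : ℝ) : Circle1) := by
    refine rel_of_frequently_of_left_mem_ratC hd (fun p hp => ?_)
      (by rwa [AddCircle.coe_neg, Circle1.neg_mem_ratC])
      (hmirror.frequently (h.mono fun p hp => by simpa [neg] using lam.symm _ _ hp))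
    simpa [neg, leaves] using hfwd (show -p ∈ lam.leaves from hp)
  simpa [neg] using lam.neg.symm _ _ hneg

end RatLam

/-! ### Points not cut off from a gap -/

namespace RatLam

variable (lam : RatLam)

/-- The points of the arc from `a` to `b` cut off by a leaf with both endpoints inside the arc. -/
def enclosed (a b : ℝ) : Set ℝ := {θ | ∃ x y, a < x ∧ x < θ ∧ θ < y ∧ y < b ∧ lam.rel x y}

variable {lam} {a b : ℝ}

theorem isOpen_enclosed : IsOpen (lam.enclosed a b) := by
  refine isOpen_iff_mem_nhds.2 fun θ ⟨x, y, hax, hxθ, hθy, hyb, hxy⟩ => ?_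
  filter_upwards [Ioo_mem_nhds hxθ hθy] with w hw
  exact ⟨x, y, hax, hw.1, hw.2, hyb, hxy⟩

theorem left_notMem_enclosed : a ∉ lam.enclosed a b :=
  fun ⟨_, _, hax, hxa, _⟩ => lt_asymm hax hxa

theorem right_notMem_enclosed : b ∉ lam.enclosed a b :=
  fun ⟨_, _, _, _, hby, hyb, _⟩ => lt_asymm hby hyb

theorem rel_min_max {x y x' y' θ : ℝ} (hθ : θ ∈ Ioo x y) (hθ' : θ ∈ Ioo x' y')
    (hle : max y y' < min x x' + 1) (hxy : lam.rel x y) (hxy' : lam.rel x' y') :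
    lam.rel ↑(min x x') ↑(max y y') := by
  wlog h : x ≤ x' generalizing x y x' y'
  · rw [min_comm, max_comm] at hle ⊢
    exact this hθ' hθ hle hxy' hxy (le_of_not_ge h)
  rw [min_eq_left h] at hle ⊢
  rcases le_total y' y with hy | hy
  · rwa [max_eq_left hy]
  rw [max_eq_right hy] at hle ⊢
  rcases h.eq_or_lt with rfl | hx
  · exact hxy'
  rcases hy.eq_or_lt with rfl | hy
  · exact hxy
  exact lam.trans _ _ _
    (lam.rel_of_crossing hx (hθ'.1.trans hθ.2) hy hle hxy hxy') hxy'

theorem exists_rel_of_Ioo_subset_enclosed (hba : b ≤ a + 1) {u v θ₁ θ₂ : ℝ}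
    (hsub : Ioo u v ⊆ lam.enclosed a b) (h₁ : θ₁ ∈ Ioo u v) (h₂ : θ₂ ∈ Ioo u v) :
    ∃ x y : ℝ, a < x ∧ y < b ∧ θ₁ ∈ Ioo x y ∧ θ₂ ∈ Ioo x y ∧ lam.rel x y := by
  refine (isPreconnected_Ioo (a := u) (b := v)).induction₂
    (fun θ₁ θ₂ => ∃ x y : ℝ, a < x ∧ y < b ∧ θ₁ ∈ Ioo x y ∧ θ₂ ∈ Ioo x y ∧ lam.rel x y)
    ?_ ?_ ?_ h₁ h₂
  · intro θ hθ
    obtain ⟨x, y, hax, hxθ, hθy, hyb, hxy⟩ := hsub hθ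
    refine mem_nhdsWithin_of_mem_nhds ?_
    filter_upwards [Ioo_mem_nhds hxθ hθy] with w hw
    exact ⟨x, y, hax, hyb, ⟨hxθ, hθy⟩, hw, hxy⟩
  · rintro p q s - - - ⟨x, y, hax, hyb, hp, hq, hxy⟩ ⟨x', y', hax', hyb', hq', hs, hxy'⟩
    have hmin := lt_min hax hax'
    have hmax := max_lt hyb hyb'
    exact ⟨min x x', max y y', hmin, hmax,
      Ioo_subset_Ioo (min_le_left _ _) (le_max_left _ _) hp,
      Ioo_subset_Ioo (min_le_right _ _) (le_max_right _ _) hs,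
      rel_min_max hq hq' (by linarith) hxy hxy'⟩
  · rintro p q - - ⟨x, y, hax, hyb, hp, hq, hxy⟩
    exact ⟨x, y, hax, hyb, hq, hp, hxy⟩

theorem frequently_rel_of_Ioo_subset_enclosed (hba : b ≤ a + 1) {u v : ℝ} (huv : u < v)
    (hsub : Ioo u v ⊆ lam.enclosed a b) (hu : u ∉ lam.enclosed a b) (hv : v ∉ lam.enclosed a b) :
    ∃ᶠ p : ℝ × ℝ in 𝓝[≥] u ×ˢ 𝓝[≤] v, lam.rel p.1 p.2 ∧ a < p.1 ∧ p.2 < b := by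
  rw [((nhdsGE_basis u).prod (nhdsLE_basis v)).frequently_iff]
  rintro ⟨s, t⟩ ⟨hs, ht⟩
  obtain ⟨θ₁, huθ₁, hθ₁⟩ := exists_between (lt_min hs huv)
  obtain ⟨θ₂, hθ₂, hθ₂v⟩ := exists_between (max_lt ht huv)
  obtain ⟨hθ₁s, hθ₁v⟩ := lt_min_iff.1 hθ₁
  obtain ⟨htθ₂, huθ₂⟩ := max_lt_iff.1 hθ₂
  obtain ⟨x, y, hax, hyb, h₁, h₂, hxy⟩ :=
    exists_rel_of_Ioo_subset_enclosed hba hsub ⟨huθ₁, hθ₁v⟩ ⟨huθ₂, hθ₂v⟩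
  have hux : u ≤ x := le_of_not_gt fun h => hu ⟨x, y, hax, h, huθ₁.trans h₁.2, hyb, hxy⟩
  have hyv : y ≤ v := le_of_not_gt fun h => hv ⟨x, y, hax, h₂.1.trans hθ₂v, h, hyb, hxy⟩
  exact ⟨(x, y), ⟨⟨hux, h₁.1.trans hθ₁s⟩, htθ₂.trans h₂.2, hyv⟩, hxy, hax, hyb⟩

variable {d : ℕ}

theorem IsGap.accPt_compl_enclosed (hd : 2 ≤ d) (hfwd : MapsTo (d • ·) lam.leaves lam.leaves)
    (hgap : lam.IsGap a b) {x : ℝ} (hx : x ∈ Ioo a b) (hxr : (x : Circle1) ∈ ratC)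
    (hxe : x ∉ lam.enclosed a b) : AccPt x (𝓟 (lam.enclosed a b)ᶜ) := by
  rw [accPt_iff_frequently_nhdsNE]
  intro hnear
  simp only [mem_compl_iff, not_not] at hnear
  obtain ⟨v, ⟨hxv, hvb⟩, hve, hsubv⟩ := exists_mem_Ioc_Ioo_subset isOpen_enclosed hx.2
    right_notMem_enclosed (nhdsWithin_mono x (fun θ hθ => ne_of_gt hθ) hnear)
  obtain ⟨u, ⟨hau, hux⟩, hue, hsubu⟩ := exists_mem_Ico_Ioo_subset isOpen_enclosed hx.1
    left_notMem_enclosed (nhdsWithin_mono x (fun θ hθ => ne_of_lt hθ) hnear)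
  have hxv' : lam.rel x v := rel_of_frequently_of_left_mem_ratC hd hfwd hxr
    ((frequently_rel_of_Ioo_subset_enclosed hgap.le_add_one hxv hsubv hxe hve).mono
      fun _ => And.left)
  have hux' : lam.rel u x := rel_of_frequently_of_right_mem_ratC hd hfwd hxr
    ((frequently_rel_of_Ioo_subset_enclosed hgap.le_add_one hux hsubu hue hxe).mono
      fun _ => And.left)
  have hua : a ≠ u := by
    rintro rfl
    exact hgap.not_rel x hx hux'
  have hvb' : v ≠ b := by
    rintro rfl
    exact hgap.not_rel x hx (lam.trans _ _ _ hgap.rel (lam.symm _ _ hxv'))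
  exact hxe ⟨u, v, hau.lt_of_ne hua, hux, hxv, hvb.lt_of_ne hvb', lam.trans _ _ _ hux' hxv'⟩

theorem IsGap.frequently_notMem_enclosed (hd : 2 ≤ d)
    (hfwd : MapsTo (d • ·) lam.leaves lam.leaves) (hgap : lam.IsGap a b)
    (hlim : ¬ lam.IsLimit true (a, b)) : ∃ᶠ θ in 𝓝[>] a, θ ∉ lam.enclosed a b := by
  intro hnear
  simp only [not_not] at hnear
  obtain ⟨v, ⟨hav, hvb⟩, hve, hsub⟩ := exists_mem_Ioc_Ioo_subset isOpen_enclosed hgap.lt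
    right_notMem_enclosed hnear
  have hfreq := frequently_rel_of_Ioo_subset_enclosed hgap.le_add_one hav hsub
    left_notMem_enclosed hve
  rcases hvb.eq_or_lt with rfl | hvb
  · exact hlim (isLimit_true_iff.2 (frequently_nhdsGT_prod_nhdsLT_iff.2 hfreq))
  · exact hgap.not_rel v ⟨hav, hvb⟩ (rel_of_frequently_of_left_mem_ratC hd hfwd
      (lam.rel_rat _ _ hgap.rel).1 (hfreq.mono fun _ => And.left))

theorem IsGap.frequently_notMem_ratC (hd : 2 ≤ d)
    (hfwd : MapsTo (d • ·) lam.leaves lam.leaves) (hgap : lam.IsGap a b)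
    (hlim : ¬ lam.IsLimit true (a, b)) :
    ∃ᶠ θ : ℝ in 𝓝[>] a, θ ∉ lam.enclosed a b ∧ (θ : Circle1) ∉ ratC := by
  intro hnear
  simp only [not_and_not_right] at hnear
  obtain ⟨c, hac, hc⟩ := mem_nhdsGT_iff_exists_Ioo_subset.1
    (inter_mem hnear (Ioo_mem_nhdsGT hgap.lt))
  have hne : ((lam.enclosed a b)ᶜ ∩ Ioo a c).Nonempty :=
    ((hgap.frequently_notMem_enclosed hd hfwd hlim).and_eventually (Ioo_mem_nhdsGT hac)).exists
  refine not_countable_inter_of_forall_accPt isOpen_enclosed.isClosed_compl isOpen_Ioo hne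
    (fun x hx => ?_) ?_
  · exact hgap.accPt_compl_enclosed hd hfwd (hc hx.2).2 ((hc hx.2).1 hx.1) hx.1
  · exact (countable_range ((↑) : ℚ → ℝ)).mono fun x hx =>
      Circle1.coe_mem_ratC_iff.1 ((hc hx.2).1 hx.1)

end RatLam

/-! ### Unlinked classes bounded by a gap -/

theorem Circle1.mem_connectedComponentIn_compl {S : Set Circle1} {u v : ℝ} (huv : u ≤ v)
    (h : ∀ w ∈ Icc u v, (w : Circle1) ∉ S) : (v : Circle1) ∈ connectedComponentIn Sᶜ u := by
  have hsub : ((↑) : ℝ → Circle1) '' Icc u v ⊆ Sᶜ := image_subset_iff.2 h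
  exact (isPreconnected_Icc.image _
    (AddCircle.continuous_mk' 1).continuousOn).subset_connectedComponentIn
      (mem_image_of_mem _ (left_mem_Icc.2 huv)) hsub (mem_image_of_mem _ (right_mem_Icc.2 huv))

namespace RatLam

variable {lam : RatLam} {a b : ℝ}

theorem IsGap.not_rel_of_notMem_enclosed (hgap : lam.IsGap a b) {θ c θ' w : ℝ} (haθ : a < θ)
    (hθc : θ < c) (hcθ' : c < θ') (hθ'b : θ' < b) (hθ'w : θ' < w) (hwθ : w < θ + 1)
    (hθ : θ ∉ lam.enclosed a b) (hθ' : θ' ∉ lam.enclosed a b) : ¬ lam.rel c w := by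
  intro hcw
  have hac : ¬ lam.rel a c := hgap.not_rel c ⟨haθ.trans hθc, hcθ'.trans hθ'b⟩
  have hshift : ((w - 1 : ℝ) : Circle1) = w := by
    rw [← Circle1.coe_add_one, sub_add_cancel]
  rcases lt_trichotomy w b with hwb | rfl | hbw
  · exact hθ' ⟨c, w, haθ.trans hθc, hcθ', hθ'w, hwb, hcw⟩
  · exact hac (lam.trans _ _ _ hgap.rel (lam.symm _ _ hcw))
  rcases lt_trichotomy (w - 1) a with hwa | hwa | haw
  · exact hac (lam.rel_of_crossing (haθ.trans hθc) (hcθ'.trans hθ'b) hbw (by linarith)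
      hgap.rel hcw)
  · rw [← hshift, hwa] at hcw
    exact hac (lam.symm _ _ hcw)
  · exact hθ ⟨w - 1, c, haw, by linarith, hθc, hcθ'.trans hθ'b, hshift ▸ lam.symm _ _ hcw⟩

theorem IsGap.mem_connectedComponentIn_compl_relClass (hgap : lam.IsGap a b) {θ θ' : ℝ}
    (haθ : a < θ) (hle : θ ≤ θ') (hθ'b : θ' < b) (hθr : (θ : Circle1) ∉ ratC)
    (hθ'r : (θ' : Circle1) ∉ ratC)
    (hθ : θ ∉ lam.enclosed a b) (hθ' : θ' ∉ lam.enclosed a b) (x : Circle1) :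
    (θ' : Circle1) ∈ connectedComponentIn (relClass lam.rel x)ᶜ θ := by
  by_cases hc : ∃ c ∈ Icc θ θ', lam.rel x c
  · obtain ⟨c, ⟨hθc, hcθ'⟩, hxc⟩ := hc
    have hne {θ w : ℝ} (hθ : (θ : Circle1) ∉ ratC) (hw : lam.rel x w) : θ ≠ w := by
      rintro rfl
      exact hθ (lam.rel_rat _ _ hw).2
    have hmem : ((θ + 1 : ℝ) : Circle1) ∈ connectedComponentIn (relClass lam.rel x)ᶜ θ' := by
      refine Circle1.mem_connectedComponentIn_compl (by linarith [hgap.le_add_one]) ?_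
      intro w hw hxw
      have hwθ := (hne (by rwa [Circle1.coe_add_one]) hxw : θ + 1 ≠ w)
      exact hgap.not_rel_of_notMem_enclosed haθ (hθc.lt_of_ne (hne hθr hxc))
        (hcθ'.lt_of_ne (hne hθ'r hxc).symm) hθ'b (hw.1.lt_of_ne (hne hθ'r hxw))
        (hw.2.lt_of_ne hwθ.symm) hθ hθ' (lam.trans _ _ _ (lam.symm _ _ hxc) hxw)
    rw [Circle1.coe_add_one] at hmem
    rw [← connectedComponentIn_eq hmem]
    exact mem_connectedComponentIn fun h => hθ'r (lam.rel_rat _ _ h).2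
  · push Not at hc
    exact Circle1.mem_connectedComponentIn_compl hle hc

theorem IsGap.unlRel (hgap : lam.IsGap a b) {θ θ' : ℝ} (hθab : θ ∈ Ioo a b) (hθ'ab : θ' ∈ Ioo a b)
    (hθr : (θ : Circle1) ∉ ratC) (hθ'r : (θ' : Circle1) ∉ ratC) (hθ : θ ∉ lam.enclosed a b)
    (hθ' : θ' ∉ lam.enclosed a b) : UnlRel lam.rel θ θ' := by
  refine ⟨hθr, hθ'r, Or.inr fun x _ => ?_⟩
  rcases le_total θ θ' with hle | hle
  · exact hgap.mem_connectedComponentIn_compl_relClass hθab.1 hle hθ'ab.2 hθr hθ'r hθ hθ' x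
  · rw [← connectedComponentIn_eq
      (hgap.mem_connectedComponentIn_compl_relClass hθ'ab.1 hle hθab.2 hθ'r hθr hθ' hθ x)]
    exact mem_connectedComponentIn fun h => hθ'r (lam.rel_rat _ _ h).2

variable {d : ℕ}

theorem IsGap.exists_infinite_unlRel (hd : 2 ≤ d) (hfwd : MapsTo (d • ·) lam.leaves lam.leaves)
    (hgap : lam.IsGap a b) (hlim : ¬ lam.IsLimit true (a, b)) :
    ∃ θ ∈ Ioo a b, (θ : Circle1) ∉ ratC ∧ {θ' | UnlRel lam.rel θ θ'}.Infinite ∧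
      (a : Circle1) ∈ closure {θ' | UnlRel lam.rel θ θ'} := by
  have hfreq := (hgap.frequently_notMem_ratC hd hfwd hlim).and_eventually
    (Ioo_mem_nhdsGT hgap.lt)
  obtain ⟨θ, ⟨hθ, hθr⟩, hθab⟩ := hfreq.exists
  have hclosure : (a : Circle1) ∈ closure {θ' | UnlRel lam.rel θ θ'} :=
    mem_closure_of_frequently_of_tendsto
      (hfreq.mono fun θ' h => hgap.unlRel hθab h.2 hθr h.1.2 hθ h.1.1)
      (((AddCircle.continuous_mk' 1).tendsto a).mono_left nhdsWithin_le_nhds)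
  refine ⟨θ, hθab, hθr, fun hfin => ?_, hclosure⟩
  rw [hfin.isClosed.closure_eq] at hclosure
  exact hclosure.2.1 (lam.rel_rat _ _ hgap.rel).1

theorem IsGap.not_unlRel (hgap : lam.IsGap a b) {θ θ' : ℝ} (hθ : θ ∈ Ioo a b)
    (hθ' : θ' ∈ Ioo b (a + 1)) : ¬ UnlRel lam.rel θ θ' := by
  rintro ⟨hθr, -, h⟩
  have har := (lam.rel_rat _ _ hgap.rel).1
  have hself := mem_connectedComponentIn (F := (relClass lam.rel a)ᶜ) (x := (θ : Circle1))
    fun h => hθr (lam.rel_rat _ _ h).2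
  have hmem : (θ' : Circle1) ∈ connectedComponentIn (relClass lam.rel a)ᶜ θ := by
    rcases h with heq | h
    exacts [heq ▸ hself, h _ har]
  have havoid := connectedComponentIn_subset (relClass lam.rel a)ᶜ θ
  exact Circle1.notMem_of_isPreconnected hθ.1 hθ.2 hθ'.1 hθ'.2 isPreconnected_connectedComponentIn
    (fun h => havoid h (lam.refl _ har)) (fun h => havoid h hgap.rel) hself hmem

variable (lam) in
/-- Of any two distinct gaps of a class, one at least is bounded by a limit of leaves inside it.
This is what primitivity says about the gaps. -/
def GapsAccumulated : Prop :=
  ∀ ⦃a b a' b' : ℝ⦄, lam.IsGap a b → lam.IsGap a' b' → lam.rel a a' → b ≤ a' → b' ≤ a + 1 →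
    lam.IsLimit true (a, b) ∨ lam.IsLimit true (a', b')

theorem gapsAccumulated_of_primitiveLam (hd : 2 ≤ d)
    (hfwd : MapsTo (d • ·) lam.leaves lam.leaves) (hprim : PrimitiveLam d lam.rel) :
    lam.GapsAccumulated := by
  intro a b a' b' hgap hgap' haa' hba' hb'a
  by_contra! hlim
  obtain ⟨θ, hθ, hθr, hinf, hclosure⟩ := hgap.exists_infinite_unlRel hd hfwd hlim.1
  obtain ⟨θ', hθ', hθ'r, hinf', hclosure'⟩ := hgap'.exists_infinite_unlRel hd hfwd hlim.2
  have har := (lam.rel_rat _ _ haa').1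
  refine hprim ⟨_, _, a, ⟨_, hθr, rfl⟩, hinf, ⟨_, hθ'r, rfl⟩, hinf', fun heq => ?_, har,
    ⟨_, lam.refl _ har, hclosure⟩, ⟨_, haa', hclosure'⟩⟩
  exact hgap.not_unlRel hθ ⟨hba'.trans_lt hθ'.1, hθ'.2.trans_le hb'a⟩
    (heq.superset ⟨hθ'r, hθ'r, Or.inl rfl⟩)

end RatLam

/-! ### Pulling leaves back along limit sides -/

theorem Circle1.exists_pos_nsmul_ne_and_nsmul_inj {M : ℕ} (hM : M ≠ 0) (x y : ℝ) : ∃ ε > 0,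
    (∀ s ∈ Ioo x (x + ε), ∀ t ∈ Ioo (y - ε) y, M • (s : Circle1) ≠ M • (t : Circle1)) ∧
    ∀ s ∈ Ioo (y - ε) y, ∀ t ∈ Ioo (y - ε) y, M • (s : Circle1) = M • (t : Circle1) → s = t := by
  have hM' : (0 : ℝ) < M := by positivity
  set A : Set Circle1 := {0, M • (y : Circle1) - M • (x : Circle1)}
  obtain ⟨γ, hγ, hball⟩ :=
    Metric.mem_nhdsWithin_iff.1 (Circle1.eventually_coe_notMem (toFinite A) 0)
  obtain ⟨ε, hε, hMε⟩ : ∃ ε > 0, M * (ε + ε) = γ :=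
    ⟨γ / (2 * M), by positivity, by field_simp; ring⟩
  have hsmall {r : ℝ} (hr : |r| < ε + ε) (hmem : M • (r : Circle1) ∈ A) : r = 0 := by
    by_contra hr0
    rw [← AddCircle.coe_nsmul, nsmul_eq_mul] at hmem
    refine hball ⟨?_, mul_ne_zero hM'.ne' hr0⟩ hmem
    rw [mem_ball_zero_iff, norm_mul, Real.norm_of_nonneg hM'.le, Real.norm_eq_abs, ← hMε]
    gcongr
  refine ⟨ε, hε, fun s hs t ht hst => ?_, fun s hs t ht hst => sub_eq_zero.1 (hsmall ?_ ?_)⟩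
  · have hpos : 0 < (s - x) + (y - t) := by linarith [hs.1, ht.2]
    refine hpos.ne' (hsmall ?_ (Or.inr ?_))
    · rw [abs_of_pos hpos]
      linarith [hs.2, ht.1]
    · rw [mem_singleton_iff, AddCircle.coe_add, AddCircle.coe_sub, AddCircle.coe_sub, nsmul_add,
        nsmul_sub, nsmul_sub, hst]
      abel
  · rw [abs_lt]
    constructor <;> linarith [hs.1, hs.2, ht.1, ht.2]
  · rw [AddCircle.coe_sub, nsmul_sub, hst, sub_self]
    exact Or.inl rfl

namespace RatLam

variable {lam : RatLam}

variable (lam) in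
/-- Multiplication by `M` maps every class onto a class. This is the part of `M`-invariance that
does not mention the cyclic order. -/
def ImageInvariant (M : ℕ) : Prop :=
  ∀ x ∈ ratC, md M '' relClass lam.rel x = relClass lam.rel (md M x)

namespace ImageInvariant

variable {M : ℕ}

theorem mapsTo_leaves (hinv : lam.ImageInvariant M) :
    MapsTo (M • ·) lam.leaves lam.leaves := fun p hp =>
  (hinv p.1 (lam.rel_rat _ _ hp).1).subset (mem_image_of_mem _ hp)

theorem exists_rel_nsmul_eq (hinv : lam.ImageInvariant M) (hM : M ≠ 0) {x z : Circle1}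
    (h : lam.rel (M • x) z) : ∃ y, lam.rel x y ∧ M • y = z :=
  (hinv x (Circle1.mem_ratC_of_nsmul_mem hM (lam.rel_rat _ _ h).1)).superset h

theorem pow (hinv : lam.ImageInvariant M) (k : ℕ) : lam.ImageInvariant (M ^ k) := by
  intro x hx
  induction k with
  | zero => simp [show md 1 = id from funext one_nsmul]
  | succ k ih =>
    have hmd : md (M ^ (k + 1)) = md M ∘ md (M ^ k) := by
      funext y
      simp only [md, comp_apply, smul_smul, pow_succ']
    rw [hmd, image_comp, ih, comp_apply]
    exact hinv _ (Circle1.nsmul_mem_ratC _ hx)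

end ImageInvariant

variable (lam) in
/-- The leaf `e` is a limit of leaves on its side `η`. -/
def Accumulated (η : Bool) (e : Circle1 × Circle1) : Prop := e ∈ lam.leaves ∧ lam.IsLimit η e

theorem Accumulated.swap {η : Bool} {e : Circle1 × Circle1} (h : lam.Accumulated η e) :
    lam.Accumulated (!η) e.swap := by
  refine ⟨lam.symm _ _ h.1, ?_⟩
  rw [IsLimit, ← map_swap_germ, frequently_map]
  exact h.2.mono fun w hw => lam.symm _ _ hw

theorem Accumulated.nsmul {M : ℕ} (hM : M ≠ 0) (hinv : lam.ImageInvariant M) {η : Bool}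
    {e : Circle1 × Circle1} (h : lam.Accumulated η e) : lam.Accumulated η (M • e) :=
  ⟨hinv.mapsTo_leaves h.1, h.2.nsmul hM hinv.mapsTo_leaves⟩

theorem Accumulated.eventually_mem_Ioo_union_Ioo {x y ε : ℝ} (h : lam.Accumulated true (x, y))
    (hxy : x < y) (hyx : y ≤ x + 1) (hε : 0 < ε) : ∀ᶠ s : ℝ in 𝓝[>] x,
      ∀ Y ∈ Ioc x (x + 1), lam.rel s Y → Y ∈ Ioo x (x + ε) ∪ Ioo (y - ε) y := by
  filter_upwards [h.2.eventually_not_rel hyx hε, Ioo_mem_nhdsGT hxy,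
    nhdsWithin_mono x (fun s hs => ne_of_gt hs) (lam.eventually_not_rel x x)] with
    s hmid hs hxs Y hY hsY
  have hYy : Y < y := by
    by_contra! hyY
    refine hxs ?_
    rcases hyY.eq_or_lt with rfl | hyY
    · exact lam.trans _ _ _ h.1 (lam.symm _ _ hsY)
    rcases hY.2.eq_or_lt with rfl | hYx
    · rw [Circle1.coe_add_one] at hsY
      exact lam.symm _ _ hsY
    · exact lam.rel_of_crossing hs.1 hs.2 hyY hYx h.1 hsY
  by_contra! hfar
  simp only [mem_union, mem_Ioo, not_or, not_and, not_lt] at hfar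
  exact hmid Y ⟨hfar.1 hY.1, le_of_not_gt fun hlt => (hfar.2 hlt).not_gt hYy⟩ hsY

theorem Accumulated.eventually_mem_leaves_of_nsmul_true {M : ℕ} (hM : M ≠ 0)
    (hinv : lam.ImageInvariant M) {x y : ℝ} (h : lam.Accumulated true (x, y)) (hxy : x < y)
    (hyx : y ≤ x + 1) :
    ∀ᶠ w in germ true (x, y), M • w ∈ lam.leaves → w ∈ lam.leaves := by
  obtain ⟨ε, hε, hfar, hnear⟩ := Circle1.exists_pos_nsmul_ne_and_nsmul_inj hM x y
  rw [germ_true_coe, eventually_map]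
  filter_upwards [(h.eventually_mem_Ioo_union_Ioo hxy hyx hε).prod_mk
    (Ioo_mem_nhdsLT (show y - ε < y by linarith))] with ⟨s, t⟩ ⟨htrap, ht⟩ hleaf
  obtain ⟨Y, hsY, hYt⟩ := hinv.exists_rel_nsmul_eq hM hleaf
  obtain ⟨Y, hY, rfl⟩ := Circle1.exists_mem_Ioc_coe_eq x Y
  rcases htrap Y hY hsY with hYx | hYy
  · exact absurd hYt (hfar Y hYx t ht)
  · rwa [hnear Y hYy t ht hYt] at hsY

theorem Accumulated.eventually_mem_leaves_of_nsmul {M : ℕ} (hM : M ≠ 0)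
    (hinv : lam.ImageInvariant M) {η : Bool} {e : Circle1 × Circle1} (h : lam.Accumulated η e) :
    ∀ᶠ w in germ η e, M • w ∈ lam.leaves → w ∈ lam.leaves := by
  wlog hη : η = true generalizing η e
  · obtain rfl : η = false := by simpa using hη
    have hswap := this h.swap rfl
    rw [← Prod.swap_swap e, ← Bool.not_true, ← map_swap_germ, eventually_map]
    exact hswap.mono fun w hw hMw => lam.symm _ _ (hw (lam.symm _ _ hMw))
  subst hη
  obtain ⟨x, y⟩ := e
  induction x using QuotientAddGroup.induction_on with | H x => ?_
  obtain ⟨y, hy, rfl⟩ := Circle1.exists_mem_Ioc_coe_eq x y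
  exact h.eventually_mem_leaves_of_nsmul_true hM hinv hy.1 hy.2

theorem Accumulated.eventually_of_nsmul {M : ℕ} (hM : M ≠ 0) (hinv : lam.ImageInvariant M)
    {η : Bool} {e : Circle1 × Circle1} (h : lam.Accumulated η e) :
    ∀ᶠ w in germ η e, ∀ η', lam.Accumulated η' (M • w) → lam.Accumulated η' w := by
  have hpull := h.eventually_mem_leaves_of_nsmul hM hinv
  filter_upwards [eventually_germ_eventually_nhds hpull] with w hw η' hMw
  refine ⟨hw.self_of_nhds hMw.1, ?_⟩
  have hlim := hMw.2
  rw [IsLimit, ← map_nsmul_germ hM, frequently_map] at hlim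
  exact (hlim.and_eventually (germ_le_nhds η' w hw)).mono fun u hu => hu.2 hu.1

end RatLam

/-! ### Existence of accumulated leaves -/

namespace RatLam

variable {lam : RatLam}

theorem GapsAccumulated.exists_accumulated (hgaps : lam.GapsAccumulated) {x y : ℝ} (hxy : x < y)
    (hyx : y < x + 1) (hrel : lam.rel x y) : ∃ e, lam.Accumulated true e := by
  have havoid {u v : ℝ} (huv : u < v) : ∃ c ∈ Ioo u v, ¬ lam.rel u c := by
    have hfree : ∀ᶠ w : ℝ in 𝓝[>] u, ¬ lam.rel u w :=
      nhdsWithin_mono u (fun w hw => ne_of_gt hw) (lam.eventually_not_rel u u)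
    exact (hfree.and (Ioo_mem_nhdsGT huv)).exists.imp fun c hc => hc.symm
  have hyx' : lam.rel y ↑(x + 1) := by
    rw [Circle1.coe_add_one]
    exact lam.symm _ _ hrel
  obtain ⟨c, hc, hxc⟩ := havoid hxy
  obtain ⟨c', hc', hyc'⟩ := havoid hyx
  obtain ⟨a, b, hgap, hxa, hax, -, -, hby⟩ := lam.exists_isGap hc.1 hc.2 hyx.le hrel hxc
  obtain ⟨a', b', hgap', hya', hya, -, -, hbx⟩ :=
    lam.exists_isGap hc'.1 hc'.2 (by linarith) hyx' hyc'
  have haa' : lam.rel a a' :=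
    lam.trans _ _ _ (lam.symm _ _ hxa) (lam.trans _ _ _ hrel hya')
  rcases hgaps hgap hgap' haa' (hby.trans hya) (by linarith) with hlim | hlim
  exacts [⟨_, hgap.rel, hlim⟩, ⟨_, hgap'.rel, hlim⟩]

theorem GapsAccumulated.exists_accumulated_of_nontrivial (hgaps : lam.GapsAccumulated)
    (hnt : ∃ x y, lam.rel x y ∧ x ≠ y) : ∃ e, lam.Accumulated true e := by
  obtain ⟨x, y, hxy, hne⟩ := hnt
  induction x using QuotientAddGroup.induction_on with | H x => ?_
  obtain ⟨y, hy, rfl⟩ := Circle1.exists_mem_Ioc_coe_eq x y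
  refine hgaps.exists_accumulated hy.1 (hy.2.lt_of_ne ?_) hxy
  rintro rfl
  exact hne (Circle1.coe_add_one x).symm

theorem GapsAccumulated.exists_accumulated_of_trapped (hgaps : lam.GapsAccumulated)
    {p q A B ε : ℝ} (hqp : q ≤ p + 1) (hε : p + ε ≤ q - ε) (hA : A ∈ Ioo p (p + ε))
    (hB : B ∈ Ioo (q - ε) q) (hAB : lam.rel A B)
    (htrap : ∀ Y ∈ Ioc p (p + 1), lam.rel A Y → Y ∈ Ioo p (p + ε) ∪ Ioo (q - ε) q) :
    ∃ α ∈ Ioo p (p + ε), ∃ β ∈ Ioo (q - ε) q, ∃ η, lam.Accumulated η (α, β) := by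
  have htrapL {Y : ℝ} (hpY : p < Y) (hYq : Y ≤ q - ε) (hY : lam.rel A Y) : Y ∈ Ioo p (p + ε) :=
    (htrap Y ⟨hpY, by linarith [hB.1, hB.2]⟩ hY).resolve_right fun h => h.1.not_ge hYq
  have htrapR {Y : ℝ} (hpY : p + ε ≤ Y) (hYq : Y ≤ p + 1) (hY : lam.rel A Y) : Y ∈ Ioo (q - ε) q :=
    (htrap Y ⟨by linarith [hA.1, hA.2], hYq⟩ hY).resolve_left fun h => h.2.not_ge hpY
  have hmid : ¬ lam.rel A ↑(p + ε) := fun h => (htrapL (by linarith [hA.1, hA.2]) hε h).2.false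
  have hq : ¬ lam.rel A q := fun h =>
    (htrapR (by linarith [hB.1, hB.2]) hqp h).2.false
  obtain ⟨α, β, hgap, hAα, hle, hα, hβ, hβB⟩ :=
    lam.exists_isGap hA.2 (by linarith [hB.1]) (by linarith [hA.1, hB.2]) hAB hmid
  have hAβ := lam.trans _ _ _ hAα hgap.rel
  have hαmem : α ∈ Ioo p (p + ε) := ⟨hA.1.trans_le hle, hα⟩
  have hβmem : β ∈ Ioo (q - ε) q := htrapR hβ.le (by linarith [hB.2]) hAβ
  have hβα : lam.rel β ↑(α + 1) := by
    rw [Circle1.coe_add_one]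
    exact lam.symm _ _ hgap.rel
  obtain ⟨β', α', hgap', hββ', hle', hβ'q, hqα', hα'⟩ := lam.exists_isGap hβmem.2
    (by linarith [hαmem.1]) (by linarith [hgap.lt]) hβα
    fun h => hq (lam.trans _ _ _ hAβ h)
  have hαβ' := lam.trans _ _ _ hgap.rel hββ'
  have hAα' := lam.trans _ _ _ hAα (lam.trans _ _ _ hαβ' hgap'.rel)
  have hα'p : p + 1 < α' := by
    by_contra! h
    exact (htrapR (by linarith [hB.1, hB.2]) h hAα').2.not_gt hqα'
  rcases hgaps hgap hgap' hαβ' hle' hα' with hlim | hlim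
  · exact ⟨α, hαmem, β, hβmem, true, hgap.rel, hlim⟩
  · have hacc : lam.Accumulated true (β', α') := ⟨hgap'.rel, hlim⟩
    refine ⟨α' - 1, ⟨by linarith, by linarith⟩, β', ⟨hβmem.1.trans_le hle', hβ'q⟩, false, ?_⟩
    rw [← Circle1.coe_add_one, sub_add_cancel]
    exact hacc.swap

theorem GapsAccumulated.frequently_accumulated (hgaps : lam.GapsAccumulated) {η : Bool}
    {e : Circle1 × Circle1} (h : lam.Accumulated η e) :
    ∃ᶠ w in germ η e, ∃ η', lam.Accumulated η' w := by
  wlog hη : η = true generalizing η e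
  · obtain rfl : η = false := by simpa using hη
    have hswap := this h.swap rfl
    rw [← Prod.swap_swap e, ← Bool.not_true, ← map_swap_germ, frequently_map]
    exact hswap.mono fun w ⟨η', hw⟩ => ⟨_, hw.swap⟩
  subst hη
  obtain ⟨p, q⟩ := e
  induction p using QuotientAddGroup.induction_on with | H p => ?_
  obtain ⟨q, ⟨hpq, hqp⟩, rfl⟩ := Circle1.exists_mem_Ioc_coe_eq p q
  rw [germ_true_coe, frequently_map, ((nhdsGT_basis p).prod (nhdsLT_basis q)).frequently_iff]
  rintro ⟨s, t⟩ ⟨hs, ht⟩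
  obtain ⟨ε, hε, hεlt⟩ := exists_between (show 0 < min (min (s - p) (q - t)) ((q - p) / 2) from
    lt_min (lt_min (sub_pos.2 hs) (sub_pos.2 ht)) (by linarith))
  obtain ⟨⟨hεs, hεt⟩, hεpq⟩ := by simpa only [lt_min_iff] using hεlt
  have hnear : ∀ᶠ w : ℝ × ℝ in 𝓝[>] p ×ˢ 𝓝[<] q, w.1 ∈ Ioo p (p + ε) ∧ w.2 ∈ Ioo (q - ε) q :=
    prod_mem_prod (Ioo_mem_nhdsGT (by linarith)) (Ioo_mem_nhdsLT (by linarith))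
  obtain ⟨⟨A, B⟩, hAB, ⟨hA, hB⟩, htrap⟩ := ((isLimit_true_iff.1 h.2).and_eventually (hnear.and
    ((h.eventually_mem_Ioo_union_Ioo hpq hqp hε).prod_inl _))).exists
  obtain ⟨α, hα, β, hβ, η', hacc⟩ :=
    hgaps.exists_accumulated_of_trapped hqp (by linarith) hA hB hAB htrap
  exact ⟨(α, β), ⟨⟨hα.1, by linarith [hα.2]⟩, by linarith [hβ.1], hβ.2⟩, η', hacc⟩

end RatLam

/-! ### A contraction in a quadrant -/

theorem eventually_mem_quadrant_and_norm_lt (η : Bool) {δ : ℝ} (hδ : 0 < δ) :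
    ∀ᶠ v in 𝓝[quadrant η] (0 : ℝ × ℝ), v ∈ quadrant η ∧ ‖v‖ < δ := by
  filter_upwards [self_mem_nhdsWithin, nhdsWithin_le_nhds (Metric.ball_mem_nhds 0 hδ)]
    with v hv hvδ using ⟨hv, by simpa using hvδ⟩

theorem mem_quadrant_of_smul_add_smul_eq {η : Bool} {ζ v : ℝ × ℝ} {s r : ℝ} (hζ : ζ ∈ quadrant η)
    (hs : 0 < s) (hr : r < 1) (hv : s • ζ + r • v = v) : v ∈ quadrant η := by
  have hscaled : (1 - r) • v = s • ζ := by rw [sub_smul, one_smul, sub_eq_iff_eq_add, hv]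
  rw [← smul_mem_quadrant (sub_pos.2 hr), hscaled]
  exact (smul_mem_quadrant hs).2 hζ

section Contraction

variable {η : Bool} {L : Set (ℝ × ℝ)} {t c ρ : ℝ} {ζ : ℝ × ℝ}

theorem pow_smul_mem_of_forall (ht0 : 0 < t) (ht1 : t ≤ 1)
    (hshrink : ∀ v ∈ quadrant η, ‖v‖ < ρ → v ∈ L → t • v ∈ L)
    {v : ℝ × ℝ} (hvη : v ∈ quadrant η) (hvρ : ‖v‖ < ρ) (hv : v ∈ L) (n : ℕ) : t ^ n • v ∈ L := by
  induction n with
  | zero => simpa using hv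
  | succ n ih =>
    rw [pow_succ', mul_smul]
    refine hshrink _ ((smul_mem_quadrant (pow_pos ht0 n)).2 hvη) (lt_of_le_of_lt ?_ hvρ) ih
    rw [norm_smul, norm_pow, Real.norm_of_nonneg ht0.le]
    exact mul_le_of_le_one_left (norm_nonneg v) (pow_le_one₀ ht0.le ht1)

theorem mapsTo_smul_add_smul {δ : ℝ} (ht0 : 0 < t) (ht1 : t ≤ 1) (hc0 : 0 < c) (hc1 : c ≤ 1)
    (hshrink : ∀ v ∈ quadrant η, ‖v‖ < ρ → v ∈ L → t • v ∈ L) (hζ : ζ ∈ quadrant η)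
    (hpull : ∀ v ∈ quadrant η, ‖v‖ < δ → v ∈ L → ζ + c • v ∈ L) (hδ : ‖ζ‖ + δ ≤ ρ)
    {n : ℕ} (hn : t ^ n * ρ ≤ δ) :
    MapsTo (fun v => t ^ n • ζ + (t ^ n * c) • v) {v ∈ L | v ∈ quadrant η ∧ ‖v‖ < δ}
      {v ∈ L | v ∈ quadrant η ∧ ‖v‖ < δ} := by
  rintro v ⟨hvL, hvη, hvδ⟩
  have hs : 0 < t ^ n := pow_pos ht0 n
  have hmem : ζ + c • v ∈ quadrant η := add_mem_quadrant hζ ((smul_mem_quadrant hc0).2 hvη)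
  have hnorm : ‖ζ + c • v‖ < ρ := calc
    ‖ζ + c • v‖ ≤ ‖ζ‖ + ‖c • v‖ := norm_add_le _ _
    _ = ‖ζ‖ + c * ‖v‖ := by rw [norm_smul, Real.norm_of_nonneg hc0.le]
    _ ≤ ‖ζ‖ + ‖v‖ := by gcongr; exact mul_le_of_le_one_left (norm_nonneg v) hc1
    _ < ρ := by linarith
  beta_reduce
  rw [mul_smul, ← smul_add]
  refine ⟨pow_smul_mem_of_forall ht0 ht1 hshrink hmem hnorm (hpull v hvη hvδ hvL) n,
    (smul_mem_quadrant hs).2 hmem, ?_⟩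
  rw [norm_smul, Real.norm_of_nonneg hs.le]
  exact (mul_lt_mul_of_pos_left hnorm hs).trans_le hn

theorem exists_mem_quadrant_pow_smul_eq_self (ht0 : 0 < t) (ht1 : t < 1) (hc0 : 0 < c)
    (hc1 : c ≤ 1) (hL : ∃ᶠ v in 𝓝[quadrant η] 0, v ∈ L)
    (hshrink : ∀ v ∈ quadrant η, ‖v‖ < ρ → v ∈ L → t • v ∈ L)
    (hζ : ζ ∈ quadrant η) (hζρ : ‖ζ‖ < ρ)
    (hpull : ∀ᶠ v in 𝓝[quadrant η] 0, v ∈ L → ζ + c • v ∈ L) :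
    ∃ n > 0, ∃ v ∈ closure L, v ∈ quadrant η ∧ ‖v‖ < ρ ∧ t ^ n • (ζ + c • v) = v := by
  obtain ⟨ε, hε, hball⟩ := Metric.mem_nhdsWithin_iff.1 hpull
  obtain ⟨δ, hδ0, hδ⟩ := exists_between (lt_min hε (sub_pos.2 hζρ))
  obtain ⟨hδε, hδρ⟩ := lt_min_iff.1 hδ
  obtain ⟨n, hnδ, hn0⟩ : ∃ n, t ^ n * ρ < δ ∧ 0 < n := by
    have hlim := (tendsto_pow_atTop_nhds_zero_of_lt_one ht0.le ht1).mul_const ρ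
    rw [zero_mul] at hlim
    exact ((hlim.eventually_lt_const hδ0).and (eventually_gt_atTop 0)).exists
  have hratio : t ^ n * c < 1 := mul_lt_one_of_nonneg_of_lt_one_left (by positivity)
    (pow_lt_one₀ ht0.le ht1 hn0.ne') hc1
  obtain ⟨v, hvcl, hv⟩ := exists_mem_closure_isFixedPt (hL.and_eventually
    (eventually_mem_quadrant_and_norm_lt η hδ0)).exists (by positivity) hratio
    (mapsTo_smul_add_smul ht0 ht1.le hc0 hc1 hshrink hζ
      (fun v hvη hvδ => hball ⟨by simpa using hvδ.trans hδε, hvη⟩) (by linarith) hnδ.le)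
  have hvδ : ‖v‖ ≤ δ := closure_minimal (fun w hw => hw.2.2.le)
    (isClosed_le continuous_norm continuous_const) hvcl
  refine ⟨n, hn0, v, closure_mono (fun w hw => hw.1) hvcl,
    mem_quadrant_of_smul_add_smul_eq hζ (pow_pos ht0 n) hratio hv, ?_, ?_⟩
  · linarith [norm_nonneg ζ]
  · rw [smul_add, smul_smul, hv]

end Contraction

namespace RatLam

variable {lam : RatLam} {D : ℕ}

variable (lam D) in
/-- The sided leaf `q` is reached from the sided leaf `p`: arbitrarily close to `p`, on its side,
there are iterated preimages of `q` that are accumulated on the same side as `q`. -/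
def Reaches (p q : Bool × Circle1 × Circle1) : Prop :=
  ∃ᶠ w in germ p.1 p.2, lam.Accumulated q.1 w ∧ ∃ k, D ^ k • w = q.2

theorem Reaches.trans (hD : D ≠ 0) (hinv : lam.ImageInvariant D)
    {p q r : Bool × Circle1 × Circle1} (hpq : lam.Reaches D p q) (hqr : lam.Reaches D q r) :
    lam.Reaches D p r := by
  refine frequently_germ_of_frequently_nhds (hpq.mono ?_)
  rintro w ⟨hacc, k, hk⟩
  have hDk : D ^ k ≠ 0 := pow_ne_zero k hD
  rw [Reaches, ← hk, ← map_nsmul_germ hDk, frequently_map] at hqr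
  refine ((hqr.and_eventually (hacc.eventually_of_nsmul hDk (hinv.pow k))).filter_mono
    (germ_le_nhds _ _)).mono ?_
  rintro u ⟨⟨hu, m, hm⟩, hpull⟩
  exact ⟨hpull _ hu, m + k, by rw [pow_add, mul_smul, hm]⟩

variable (lam D) in
/-- The leaves fixed by multiplication by `D`, together with a side on which they are limits of
leaves. -/
def fixedSides : Set (Bool × Circle1 × Circle1) := {p | D • p.2 = p.2 ∧ lam.Accumulated p.1 p.2}

theorem finite_fixedSides (hD : 2 ≤ D) : (lam.fixedSides D).Finite := by
  have hfix : {x : Circle1 | D • x = x}.Finite := Circle1.finite_setOf_nsmul_eq hD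
  refine (finite_univ.prod (hfix.prod hfix)).subset fun p hp => ⟨mem_univ _, ?_, ?_⟩
  exacts [congrArg Prod.fst hp.1, congrArg Prod.snd hp.1]

theorem exists_pow_nsmul_fixed (hfix : ∀ x ∈ suppRel lam.rel, ∃ k, D • D ^ k • x = D ^ k • x)
    {w : Circle1 × Circle1} (hw : w ∈ lam.leaves) (hne : w.1 ≠ w.2) :
    ∃ k, D • D ^ k • w = D ^ k • w := by
  obtain ⟨k₁, h₁⟩ := hfix w.1 ⟨w.2, hw, hne.symm⟩
  obtain ⟨k₂, h₂⟩ := hfix w.2 ⟨w.1, lam.symm _ _ hw, hne⟩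
  refine ⟨k₁ + k₂, Prod.ext ?_ ?_⟩
  · simp only [Prod.smul_fst]
    rw [add_comm, pow_add, mul_smul, smul_comm, h₁]
  · simp only [Prod.smul_snd]
    rw [pow_add, mul_smul, smul_comm, h₂]

theorem GapsAccumulated.exists_reaches (hgaps : lam.GapsAccumulated) (hD : 2 ≤ D)
    (hinv : lam.ImageInvariant D)
    (hfix : ∀ x ∈ suppRel lam.rel, ∃ k, D • D ^ k • x = D ^ k • x)
    {p : Bool × Circle1 × Circle1} (hp : lam.Accumulated p.1 p.2) :
    ∃ q ∈ lam.fixedSides D, lam.Reaches D p q := by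
  have hfreq := (hgaps.frequently_accumulated hp).and_eventually
    (eventually_germ_fst_ne_snd p.1 p.2)
  refine (Filter.frequently_exists_finite (finite_fixedSides hD)).1 (hfreq.mono ?_)
  rintro w ⟨⟨η, hacc⟩, hne⟩
  obtain ⟨k, hk⟩ := exists_pow_nsmul_fixed hfix hacc.1 hne
  exact ⟨(η, D ^ k • w), ⟨hk, hacc.nsmul (by positivity) (hinv.pow k)⟩, hacc, k, rfl⟩

theorem GapsAccumulated.exists_reaches_self (hgaps : lam.GapsAccumulated) (hD : 2 ≤ D)
    (hinv : lam.ImageInvariant D)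
    (hfix : ∀ x ∈ suppRel lam.rel, ∃ k, D • D ^ k • x = D ^ k • x)
    {η : Bool} {e : Circle1 × Circle1} (he : lam.Accumulated η e) :
    ∃ p ∈ lam.fixedSides D, lam.Reaches D p p := by
  have := (lam.finite_fixedSides hD).to_subtype
  obtain ⟨q, hq, -⟩ := hgaps.exists_reaches hD hinv hfix (p := (η, e)) he
  have : Nonempty (lam.fixedSides D) := ⟨q, hq⟩
  obtain ⟨p, hp⟩ := exists_rel_self_of_total_of_trans
    (R := fun p q : lam.fixedSides D => lam.Reaches D p q)
    (fun p => by
      obtain ⟨q, hq, hpq⟩ := hgaps.exists_reaches hD hinv hfix p.2.2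
      exact ⟨⟨q, hq⟩, hpq⟩)
    (fun _ _ _ => Reaches.trans (by positivity) hinv)
  exact ⟨p, p.2, hp⟩

end RatLam

theorem nsmul_torusMk_inv_smul {M : ℕ} (hM : M ≠ 0) (v : ℝ × ℝ) :
    M • torusMk ((M : ℝ)⁻¹ • v) = torusMk v := by
  rw [← map_nsmul, ← Nat.cast_smul_eq_nsmul ℝ, smul_inv_smul₀ (Nat.cast_ne_zero.2 hM)]

theorem pow_nsmul_add_torusMk_eq_self {D n k : ℕ} (hD : D ≠ 0) {e : Circle1 × Circle1}
    (he : D • e = e) {ζ v : ℝ × ℝ} (hζ : D ^ k • (e + torusMk ζ) = e)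
    (hv : (D : ℝ)⁻¹ ^ n • (ζ + ((D ^ k : ℕ) : ℝ)⁻¹ • v) = v) :
    D ^ (k + n) • (e + torusMk v) = e + torusMk v := by
  have hen : D ^ n • e = e := by
    rw [← smul_iterate_apply]
    exact IsFixedPt.iterate he n
  have hDn : D ^ n • (e + torusMk v) = e + torusMk ζ + torusMk (((D ^ k : ℕ) : ℝ)⁻¹ • v) := by
    nth_rw 1 [← hv]
    rw [inv_pow, ← Nat.cast_pow, smul_add, hen,
      nsmul_torusMk_inv_smul (pow_ne_zero n hD), map_add, add_assoc]
  rw [pow_add, mul_smul, hDn, smul_add, hζ, nsmul_torusMk_inv_smul (pow_ne_zero k hD)]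

namespace RatLam

variable {lam : RatLam} {D : ℕ}

theorem mem_leaves_of_mem_closure_of_nsmul_eq {M : ℕ} (hM : 1 < M) {w : Circle1 × Circle1}
    (hw : w ∈ closure lam.leaves) (hper : M • w = w) : w ∈ lam.leaves := by
  have hrat {x : Circle1} (hx : M • x = x) : x ∈ ratC :=
    Circle1.mem_ratC_of_nsmul_eq hM (by rw [one_nsmul, hx])
  exact lam.closed' _ (hrat (congrArg Prod.fst hper)) _ (hrat (congrArg Prod.snd hper)) hw

theorem Accumulated.eventually_add_torusMk_inv_smul_mem_leaves (hD : D ≠ 0)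
    (hinv : lam.ImageInvariant D) {η : Bool} {e : Circle1 × Circle1} (h : lam.Accumulated η e)
    {q : Circle1 × Circle1} (he : D • e = q) :
    ∀ᶠ v in 𝓝[quadrant η] 0, q + torusMk v ∈ lam.leaves →
      e + torusMk ((D : ℝ)⁻¹ • v) ∈ lam.leaves := by
  have hscale : Tendsto ((D : ℝ)⁻¹ • ·) (𝓝[quadrant η] (0 : ℝ × ℝ)) (𝓝[quadrant η] 0) := by
    refine tendsto_nhdsWithin_iff.2 ⟨?_, ?_⟩
    · exact ((continuous_const_smul _).tendsto' 0 0 (smul_zero _)).mono_left nhdsWithin_le_nhds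
    · filter_upwards [self_mem_nhdsWithin] with v hv
      exact (smul_mem_quadrant (by positivity)).2 hv
  filter_upwards [hscale.eventually (eventually_map.1 (h.eventually_mem_leaves_of_nsmul hD hinv))]
    with v hv
  rwa [smul_add, he, nsmul_torusMk_inv_smul hD] at hv

theorem Reaches.frequently_periodic (hD : 2 ≤ D) (hinv : lam.ImageInvariant D)
    {p : Bool × Circle1 × Circle1} (hp : p ∈ lam.fixedSides D) (hloop : lam.Reaches D p p) :
    ∃ᶠ w in germ p.1 p.2, w ∈ lam.leaves ∧ ∃ J > 0, D ^ J • w = w := by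
  obtain ⟨η, e⟩ := p
  obtain ⟨hfix, hacc⟩ : D • e = e ∧ lam.Accumulated η e := hp
  have hD0 : D ≠ 0 := by positivity
  have hshrink := hacc.eventually_add_torusMk_inv_smul_mem_leaves hD0 hinv hfix
  intro hnot
  obtain ⟨ρ, hρ, hball⟩ := Metric.mem_nhdsWithin_iff.1 (hshrink.and hnot)
  obtain ⟨ζ, ⟨hζacc, k, hk⟩, hζη, hζρ⟩ := ((frequently_map.1 hloop).and_eventually
    (eventually_mem_quadrant_and_norm_lt η hρ)).exists
  have hpull := hζacc.eventually_add_torusMk_inv_smul_mem_leaves (pow_ne_zero k hD0)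
    (hinv.pow k) hk
  have hone : (1 : ℝ) < D := by exact_mod_cast hD
  obtain ⟨n, hn, v, hvcl, hvη, hvρ, hv⟩ := exists_mem_quadrant_pow_smul_eq_self
    (L := {v | e + torusMk v ∈ lam.leaves}) (by positivity) (inv_lt_one_of_one_lt₀ hone)
    (c := ((D ^ k : ℕ) : ℝ)⁻¹) (by positivity) (Nat.cast_inv_le_one _)
    (frequently_map.1 hacc.2)
    (fun v hvη hvρ => (hball ⟨by simpa using hvρ, hvη⟩).1) hζη hζρ
    (by simpa only [mem_ofPred_eq, map_add, ← add_assoc] using hpull)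
  have hper := pow_nsmul_add_torusMk_eq_self hD0 hfix hk hv
  have hleaf : e + torusMk v ∈ lam.leaves := mem_leaves_of_mem_closure_of_nsmul_eq
    (Nat.one_lt_pow (by lia) hD)
    (map_mem_closure (f := fun v => e + torusMk v) (continuous_torusMk.const_add e) hvcl
      fun _ hw => hw) hper
  exact (hball ⟨by simpa using hvρ, hvη⟩).2 ⟨hleaf, k + n, by lia, hper⟩

theorem GapsAccumulated.not_accumulated (hgaps : lam.GapsAccumulated) (hD : 2 ≤ D)
    (hinv : lam.ImageInvariant D)
    (hfix : ∀ x ∈ suppRel lam.rel, ∃ k, D • D ^ k • x = D ^ k • x)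
    (η : Bool) (e : Circle1 × Circle1) : ¬ lam.Accumulated η e := by
  intro he
  obtain ⟨p, hp, hloop⟩ := hgaps.exists_reaches_self hD hinv hfix he
  obtain ⟨w, ⟨⟨hleaf, J, hJ, hper⟩, hne⟩, hnot⟩ := (((hloop.frequently_periodic hD hinv
    hp).and_eventually (eventually_germ_fst_ne_snd _ _)).and_eventually
      (eventually_germ_fst_notMem (Circle1.finite_setOf_nsmul_eq hD) _ _)).exists
  obtain ⟨k, hk⟩ := hfix w.1 ⟨w.2, hleaf, hne.symm⟩
  rw [← smul_iterate_apply] at hk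
  refine hnot (isFixedPt_of_isPeriodicPt (f := (D • ·)) hJ ?_ hk)
  rw [IsPeriodicPt, IsFixedPt, smul_iterate_apply]
  exact congrArg Prod.fst hper

end RatLam

/-! ### Grand orbits of finite sets -/

section GrandOrbit

variable {α : Type*} {f : α → α}

theorem exists_pos_forall_isPeriodicPt_iterate {F : Set α} (hF : F.Finite)
    (h : ∀ y ∈ F, ∃ i j, i < j ∧ f^[i] y = f^[j] y) :
    ∃ N > 0, ∀ y ∈ F, ∃ K, IsPeriodicPt f N (f^[K] y) := by
  induction F, hF using Set.Finite.induction_on with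
  | empty => exact ⟨1, one_pos, by simp⟩
  | @insert y F _ _ ih =>
    obtain ⟨N, hN, hper⟩ := ih fun z hz => h z (mem_insert_of_mem _ hz)
    obtain ⟨i, j, hij, heq⟩ := h y (mem_insert _ _)
    refine ⟨N * (j - i), Nat.mul_pos hN (Nat.sub_pos_of_lt hij), ?_⟩
    rintro z (rfl | hz)
    · refine ⟨i, IsPeriodicPt.const_mul ?_ N⟩
      rw [IsPeriodicPt, IsFixedPt, ← iterate_add_apply, Nat.sub_add_cancel hij.le, heq]
    · obtain ⟨K, hK⟩ := hper z hz
      exact ⟨K, hK.mul_const _⟩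

theorem exists_isFixedPt_iterate_iterate {N K n m : ℕ} (hN : 0 < N) {x y : α}
    (hy : IsPeriodicPt f N (f^[K] y)) (hxy : f^[n] x = f^[m] y) :
    ∃ k, IsFixedPt f^[N] ((f^[N])^[k] x) := by
  have hle : n + K ≤ N * (n + K) := Nat.le_mul_of_pos_left _ hN
  obtain ⟨r, hr⟩ := Nat.exists_eq_add_of_le hle
  refine ⟨n + K, ?_⟩
  rw [← iterate_mul, hr, show n + K + r = r + K + n by ring, iterate_add_apply, hxy,
    ← iterate_add_apply, show r + K + m = r + m + K by ring, iterate_add_apply]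
  exact hy.apply_iterate _

end GrandOrbit

theorem exists_pos_forall_nsmul_eq_of_subset_grandOrbit {d : ℕ} (hd : d ≠ 0) {F S : Set Circle1}
    (hF : F.Finite) (hS : S ⊆ grandOrbit d F) (hrat : S ⊆ ratC) :
    ∃ N > 0, ∀ x ∈ S, ∃ k, d ^ N • (d ^ N) ^ k • x = (d ^ N) ^ k • x := by
  have hiter (n : ℕ) : (md d)^[n] = (d ^ n • ·) := smul_iterate d n
  obtain ⟨N, hN, hper⟩ := exists_pos_forall_isPeriodicPt_iterate (f := md d)
    (hF.inter_of_left ratC) fun y hy => by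
      simpa only [hiter] using Circle1.exists_pow_nsmul_eq_of_mem_ratC d hy.2
  refine ⟨N, hN, fun x hx => ?_⟩
  obtain ⟨n, m, y, hyF, hyx⟩ := hS hx
  have hy : y ∈ ratC := by
    have hmem : d ^ n • x ∈ ratC := Circle1.nsmul_mem_ratC _ (hrat hx)
    refine Circle1.mem_ratC_of_nsmul_mem (pow_ne_zero m hd) ?_
    rwa [← smul_iterate_apply d m y, show (d • ·)^[m] y = (d • ·)^[n] x from hyx,
      smul_iterate_apply]
  obtain ⟨K, hK⟩ := hper y ⟨hyF, hy⟩
  obtain ⟨k, hk⟩ := exists_isFixedPt_iterate_iterate hN hK hyx.symm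
  rw [IsFixedPt, hiter, smul_iterate_apply] at hk
  exact ⟨k, hk⟩

theorem support_in_grand_orbit_not_primitive_general (d : ℕ) (hd : 2 ≤ d) (lam : RatLam)
    (hinv : lam.ImageInvariant d) (hnt : ∃ x y, lam.rel x y ∧ x ≠ y) (F : Set Circle1)
    (hF : F.Finite) (hsupp : suppRel lam.rel ⊆ grandOrbit d F) : ¬ PrimitiveLam d lam.rel := by
  intro hprim
  have hgaps := RatLam.gapsAccumulated_of_primitiveLam hd hinv.mapsTo_leaves hprim
  obtain ⟨e, he⟩ := hgaps.exists_accumulated_of_nontrivial hnt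
  obtain ⟨N, hN, hfix⟩ := exists_pos_forall_nsmul_eq_of_subset_grandOrbit (by lia) hF hsupp
    fun x ⟨y, hxy, _⟩ => (lam.rel_rat x y hxy).1
  exact hgaps.not_accumulated (hd.trans (Nat.le_self_pow hN.ne' d)) (hinv.pow N) hfix true e he

/-- A non-trivial `d`-invariant rational lamination whose support is
contained in the `m_d`-grand orbit of a finite set is not primitive. -/
theorem support_in_grand_orbit_not_primitive (d : ℕ) (hd : 2 ≤ d)
    (lam : InvRatLam d) (hnt : ∃ x y, lam.rel x y ∧ x ≠ y)
    (F : Set Circle1) (hF : F.Finite) (hFrat : F ⊆ ratC)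
    (hsupp : suppRel lam.rel ⊆ grandOrbit d F) :
    ¬ PrimitiveLam d lam.rel :=
  support_in_grand_orbit_not_primitive_general d hd lam.toRatLam
    (fun x hx => (lam.invariant x hx).1) hnt F hF hsupp
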